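/- arXiv:2303.17567 — 13 statements merged into one kernel-verified Lean document; each statement's English description precedes it below -/
import Mathlib

section
/- Let R be a finite local nearring with identity i and let L be its subgroup of non-invertible elements. Then L is an (R,R)-subgroup of the additive group R⁺, i.e. for all x, y ∈ R and all l ∈ L one has x·l·y ∈ L. -/
/-- A left nearring with identity: `(R,+)` is a (not necessarily abelian) group,
`(R,·)` is a monoid, and the left distributive law holds. -/
class NearringWithOne (R : Type*) extends AddGroup R, Monoid R where
  left_distrib : ∀ x y z : R, x * (y + z) = x * y + x * z

/-!
A local nearring is Dedekind-finite. Suppose `a * b = 1` and put `e = b * a`, an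
idempotent. If `e` is a unit, then `e = 1`. Otherwise `e ∈ L`, so `-e + 1` is a unit, and
`e * (-e + 1) = 0` gives `e = 0 * w` for some `w`. Since `x * 0 = 0` for all `x` (whereas `0 * w`
need not vanish), it follows that `x * e = e` for all `x`. Then `a = a * e = e = b * a`, and
multiplying by `b` on the right gives `b = 1`, hence `a = 1`.
In a Dedekind-finite monoid, the factors of a unit are units.
-/

theorem mul_mul_mem_nonunits {M : Type*} [Monoid M] [IsDedekindFiniteMonoid M] {a : M}
    (ha : a ∈ nonunits M) (x y : M) : x * a * y ∈ nonunits M :=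
  fun h ↦ ha (isUnit_of_mul_isUnit_right (isUnit_of_mul_isUnit_left h))

namespace NearringWithOne

variable {R : Type*} [NearringWithOne R]

/-- Left multiplication by `x` as an endomorphism of the additive group; right multiplication is
in general not additive. -/
def mulLeft (x : R) : R →+ R :=
  AddMonoidHom.mk' (x * ·) (left_distrib x)

protected theorem mul_zero (x : R) : x * 0 = 0 :=
  map_zero (mulLeft x)

protected theorem mul_neg (x y : R) : x * -y = -(x * y) :=
  map_neg (mulLeft x) y

theorem mul_neg_self_add_one {e : R} (he : IsIdempotentElem e) : e * (-e + 1) = 0 := by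
  rw [left_distrib, NearringWithOne.mul_neg, he.eq, mul_one, neg_add_cancel]

theorem mul_eq_right_of_isUnit_neg_add_one {e : R} (he : IsIdempotentElem e)
    (hu : IsUnit (-e + 1)) (x : R) : x * e = e := by
  obtain ⟨u, hu⟩ := hu
  have he_eq : e = 0 * ↑u⁻¹ := by
    rw [Units.eq_mul_inv_iff_mul_eq, hu, mul_neg_self_add_one he]
  rw [he_eq, ← mul_assoc, NearringWithOne.mul_zero]

variable {L : AddSubgroup R}

theorem isUnit_neg_add_one_of_mem (hL : ∀ x : R, x ∈ L ↔ ¬ IsUnit x) {a : R} (ha : a ∈ L) :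
    IsUnit (-a + 1) := by
  by_contra h
  have one_mem : (1 : R) ∈ L := (L.add_mem_cancel_left (L.neg_mem ha)).1 ((hL _).2 h)
  exact (hL 1).1 one_mem isUnit_one

theorem isDedekindFiniteMonoid_of_mem_iff_not_isUnit (hL : ∀ x : R, x ∈ L ↔ ¬ IsUnit x) :
    IsDedekindFiniteMonoid R where
  mul_eq_one_symm {a b} hab := by
    have idem : IsIdempotentElem (b * a) := by
      rw [IsIdempotentElem, mul_assoc, ← mul_assoc a, hab, one_mul]
    by_cases hba : IsUnit (b * a)
    · exact (IsIdempotentElem.iff_eq_one_of_isUnit hba).1 idem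
    · have a_eq : a = b * a :=
        calc
          a = a * (b * a) := by rw [← mul_assoc, hab, one_mul]
          _ = b * a := mul_eq_right_of_isUnit_neg_add_one idem
            (isUnit_neg_add_one_of_mem hL ((hL _).2 hba)) a
      have b_eq : b = 1 :=
        calc
          b = b * a * b := by rw [mul_assoc, hab, mul_one]
          _ = 1 := by rw [← a_eq, hab]
      simpa [b_eq] using hab

end NearringWithOne

theorem nonunits_subgroup_is_RR_subgroup_general {R : Type*} [NearringWithOne R]
    (L : AddSubgroup R) (hL : ∀ x : R, x ∈ L ↔ ¬ IsUnit x)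
    (x y l : R) (hl : l ∈ L) : x * l * y ∈ L := by
  have := NearringWithOne.isDedekindFiniteMonoid_of_mem_iff_not_isUnit hL
  rw [hL] at hl ⊢
  exact mul_mul_mem_nonunits hl x y

/-- In a finite local nearring, the additive subgroup `L` of non-invertible elements
is an `(R,R)`-subgroup: `x * l * y ∈ L` for all `x y : R` and `l ∈ L`. -/
theorem nonunits_subgroup_is_RR_subgroup (R : Type*) [NearringWithOne R] [Fintype R]
    (L : AddSubgroup R) (hL : ∀ x : R, x ∈ L ↔ ¬ IsUnit x)
    (x y l : R) (hl : l ∈ L) : x * l * y ∈ L :=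
  nonunits_subgroup_is_RR_subgroup_general L hL x y l hl
end

section
/- Let R be a finite local nearring with identity i and let L be its subgroup of non-invertible elements. If M is a proper subgroup of the additive group R⁺ which is R*-invariant (that is, r·m ∈ M for every invertible element r of the monoid (R,·) and every m ∈ M), then M is contained in L. -/
/-!
If `M` contains an invertible `u`, then invariance applied to `v * u⁻¹` puts every invertible `v`
in `M`. Then `R` is the union of the proper subgroups `M` and `L`, which no group is.
-/

theorem mem_of_isUnit_of_forall_isUnit_mul_mem {R : Type*} [Monoid R] {S : Set R}
    (hS : ∀ r m : R, IsUnit r → m ∈ S → r * m ∈ S) {u v : R}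
    (hu : IsUnit u) (huS : u ∈ S) (hv : IsUnit v) : v ∈ S := by
  obtain ⟨u, rfl⟩ := hu
  have hmem : v * ↑u⁻¹ * ↑u ∈ S := hS (v * ↑u⁻¹) u (hv.mul u⁻¹.isUnit) huS
  rwa [Units.inv_mul_cancel_right] at hmem

theorem proper_invariant_subgroup_le_nonunits_general {R : Type*} [AddGroup R] [Monoid R]
    (L : AddSubgroup R) (hL : ∀ x : R, x ∈ L ↔ ¬ IsUnit x)
    (M : AddSubgroup R) (hM : M ≠ ⊤)
    (hinv : ∀ r m : R, IsUnit r → m ∈ M → r * m ∈ M) :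
    M ≤ L := by
  intro u huM
  rw [hL]
  intro hu
  have units_mem {v : R} (hv : IsUnit v) : v ∈ M :=
    mem_of_isUnit_of_forall_isUnit_mul_mem (S := (M : Set R)) hinv hu huM hv
  have cover : ((⊤ : AddSubgroup R) : Set R) ⊆ M ∪ L := fun x _ ↦
    (em (IsUnit x)).imp units_mem (hL x).mpr
  obtain hM' | hL' := AddSubgroupClass.subset_union.mp cover
  · exact hM (top_le_iff.mp hM')
  · exact (hL u).mp (hL' (AddSubgroup.mem_top u)) hu

/-- In a finite local nearring, every proper `R*`-invariant additive subgroup is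
contained in the subgroup `L` of non-invertible elements. -/
theorem proper_invariant_subgroup_le_nonunits (R : Type*) [NearringWithOne R] [Fintype R]
    (L : AddSubgroup R) (hL : ∀ x : R, x ∈ L ↔ ¬ IsUnit x)
    (M : AddSubgroup R) (hM : M ≠ ⊤)
    (hinv : ∀ r m : R, IsUnit r → m ∈ M → r * m ∈ M) :
    M ≤ L := by
  exact proper_invariant_subgroup_le_nonunits_general L hL M hM hinv
end

section
/- Let R be a finite local nearring with identity i and let L be its subgroup of non-invertible elements. Then the set i + L = { i + l : l ∈ L } forms a subgroup of the multiplicative group R* of R: every element i + l with l ∈ L is invertible, for all l₁, l₂ ∈ L there exists l₃ ∈ L with (i + l₁)·(i + l₂) = i + l₃, and for every l ∈ L there exists l' ∈ L with (i + l)·(i + l') = i. -/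
/-!
The unit group `Rˣ` acts on `(R, +)` by left multiplication, and it preserves `L`, since a unit
times a non-unit is a non-unit. It therefore permutes the left cosets of `L`, and the units lying
in `1 + L` are exactly the stabilizer of the coset `1 + L`. Since `1 ∉ L`, the coset `1 + L` is
disjoint from `L`, so it consists of units.
-/

open scoped Pointwise

theorem smul_vadd_set {M A : Type*} [AddZeroClass A] [DistribSMul M A]
    (m : M) (a : A) (s : Set A) : m • (a +ᵥ s) = m • a +ᵥ m • s := by
  simp only [← Set.image_smul, ← Set.image_vadd, Set.image_image, vadd_eq_add, smul_add]

theorem mem_stabilizer_vadd_addSubgroup_iff {G A : Type*} [Group G] [AddGroup A]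
    [DistribMulAction G A] {g : G} {L : AddSubgroup A} (hg : g • (L : Set A) = L) (a : A) :
    g ∈ MulAction.stabilizer G (a +ᵥ (L : Set A)) ↔ g • a ∈ a +ᵥ (L : Set A) := by
  rw [MulAction.mem_stabilizer_iff, smul_vadd_set, hg, eq_comm, leftAddCoset_eq_iff,
    mem_leftAddCoset_iff, SetLike.mem_coe]

theorem units_smul_nonunits {M : Type*} [Monoid M] (u : Mˣ) : u • nonunits M = nonunits M := by
  ext x
  rw [Set.mem_smul_set_iff_inv_smul_mem, Units.smul_def, smul_eq_mul, mem_nonunits_iff,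
    mem_nonunits_iff, Units.isUnit_units_mul]

namespace NearringWithOne

variable {R : Type*} [NearringWithOne R] {L : AddSubgroup R}

instance : DistribMulAction R R where
  smul_zero x := by
    have h : x * 0 + x * 0 = x * 0 := by rw [← left_distrib, add_zero]
    exact add_eq_left.mp h
  smul_add := left_distrib

theorem isUnit_one_add_of_mem (hL : (L : Set R) = nonunits R) {l : R} (hl : l ∈ L) :
    IsUnit (1 + l) := by
  by_contra h
  have h_mem : 1 + l ∈ L := hL.ge h
  have one_mem : (1 : R) ∈ L := (L.add_mem_cancel_right hl).mp h_mem
  exact hL.le one_mem isUnit_one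

/-- The group of units in `1 + L`, for an additive subgroup `L` preserved by left multiplication
by units. It is encoded as the stabilizer of the coset `1 + L`, a subgroup for every `L`; see
`mem_principalUnits_iff` for the identification. -/
def principalUnits (L : AddSubgroup R) : Subgroup Rˣ :=
  MulAction.stabilizer Rˣ ((1 : R) +ᵥ (L : Set R))

theorem mem_principalUnits_iff {u : Rˣ} (hu : u • (L : Set R) = L) :
    u ∈ principalUnits L ↔ ∃ l ∈ L, (u : R) = 1 + l := by
  rw [principalUnits, mem_stabilizer_vadd_addSubgroup_iff hu, Units.smul_def, smul_eq_mul, mul_one]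
  simp only [Set.mem_vadd_set, SetLike.mem_coe, vadd_eq_add, eq_comm]

end NearringWithOne

open NearringWithOne in
theorem one_add_nonunits_subgroup_general (R : Type*) [NearringWithOne R]
    (L : AddSubgroup R) (hL : ∀ x : R, x ∈ L ↔ ¬ IsUnit x) :
    (∀ l ∈ L, IsUnit (1 + l)) ∧
    (∀ l₁ ∈ L, ∀ l₂ ∈ L, ∃ l₃ ∈ L, (1 + l₁) * (1 + l₂) = 1 + l₃) ∧
    (∀ l ∈ L, ∃ l' ∈ L, (1 + l) * (1 + l') = 1) := by
  have hL_eq : (L : Set R) = nonunits R := Set.ext hL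
  have mem_iff (u : Rˣ) : u ∈ principalUnits L ↔ ∃ l ∈ L, (u : R) = 1 + l :=
    mem_principalUnits_iff (by rw [hL_eq, units_smul_nonunits])
  have exists_unit {l : R} (hl : l ∈ L) : ∃ u ∈ principalUnits L, (u : R) = 1 + l := by
    obtain ⟨u, hu⟩ := isUnit_one_add_of_mem hL_eq hl
    exact ⟨u, (mem_iff u).mpr ⟨l, hl, hu⟩, hu⟩
  refine ⟨fun l hl => isUnit_one_add_of_mem hL_eq hl, fun l₁ hl₁ l₂ hl₂ => ?_, fun l hl => ?_⟩
  · obtain ⟨u, hu, hul₁⟩ := exists_unit hl₁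
    obtain ⟨v, hv, hvl₂⟩ := exists_unit hl₂
    rw [← hul₁, ← hvl₂, ← Units.val_mul]
    exact (mem_iff (u * v)).mp (mul_mem hu hv)
  · obtain ⟨u, hu, hul⟩ := exists_unit hl
    obtain ⟨l', hl', hul'⟩ := (mem_iff u⁻¹).mp (inv_mem hu)
    exact ⟨l', hl', by rw [← hul, ← hul', Units.mul_inv]⟩

/-- In a finite local nearring with identity `1` and subgroup `L` of non-invertible
elements, the set `1 + L` forms a subgroup of the multiplicative group `R*`. -/
theorem one_add_nonunits_subgroup (R : Type*) [NearringWithOne R] [Fintype R]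
    (L : AddSubgroup R) (hL : ∀ x : R, x ∈ L ↔ ¬ IsUnit x) :
    (∀ l ∈ L, IsUnit (1 + l)) ∧
    (∀ l₁ ∈ L, ∀ l₂ ∈ L, ∃ l₃ ∈ L, (1 + l₁) * (1 + l₂) = 1 + l₃) ∧
    (∀ l ∈ L, ∃ l' ∈ L, (1 + l) * (1 + l') = 1) :=
  one_add_nonunits_subgroup_general R L hL
end

section
/- Let p be a prime, n > 1, and let R be a local nearring of order pⁿ whose subgroup L of non-invertible elements is cyclic and non-trivial, and suppose the additive group R⁺ is cyclic. Then the multiplication of R is commutative and right distributive, and R is isomorphic to the residue ring ℤ/pⁿℤ: there is a bijection f : R → ℤ/pⁿℤ with f(x + y) = f(x) + f(y) and f(x·y) = f(x)·f(y) for all x, y ∈ R. -/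
/-!
In a left nearring only the left translations `y ↦ x * y` are known to be additive. Still, if `g`
generates the additive group and `1 = k • g`, then `g = g * 1 = g * (k • g) = k • (g * g)`; as
`g * g` is a multiple of `g`, this makes `g` a multiple of `k • g = 1`. Hence `1` is itself an
additive generator, and on multiples of `1` the multiplication is that of the integers.
-/

namespace NearringWithOne

variable {R : Type*} [NearringWithOne R]

instance : LeftDistribClass R where
  left_distrib := NearringWithOne.left_distrib

instance : SMulCommClass ℤ R R where
  smul_comm k x y := (map_zsmul (AddMonoidHom.mk' (x * ·) (mul_add x)) k y).symm

theorem zsmul_one_mul_zsmul_one (k l : ℤ) : (k • (1 : R)) * (l • 1) = (k * l) • 1 := by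
  rw [mul_smul_comm, mul_one, mul_zsmul']

theorem mem_zmultiples_one [IsAddCyclic R] (x : R) : x ∈ AddSubgroup.zmultiples (1 : R) := by
  obtain ⟨g, hg⟩ := exists_zsmul_surjective R
  obtain ⟨k, hk : k • g = 1⟩ := hg 1
  obtain ⟨m, hm : m • g = g * g⟩ := hg (g * g)
  have g_eq : m • (1 : R) = g := calc
    m • (1 : R) = k • (m • g) := by rw [← hk, zsmul_comm]
    _ = g * (k • g) := by rw [hm, mul_smul_comm]
    _ = g := by rw [hk, mul_one]
  have g_mem : g ∈ AddSubgroup.zmultiples (1 : R) := ⟨m, g_eq⟩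
  obtain ⟨l, rfl⟩ := hg x
  exact zsmul_mem g_mem l

protected theorem mul_comm [IsAddCyclic R] (x y : R) : x * y = y * x := by
  obtain ⟨k, rfl⟩ := mem_zmultiples_one x
  obtain ⟨l, rfl⟩ := mem_zmultiples_one y
  simp only [zsmul_one_mul_zsmul_one, mul_comm k l]

protected theorem add_mul [IsAddCyclic R] (x y z : R) : (x + y) * z = x * z + y * z := by
  simp only [NearringWithOne.mul_comm _ z, mul_add]

theorem zmodAddEquivOfGenerator_mul [IsAddCyclic R] {n : ℕ} (hn : Nat.card R = n) (a b : ZMod n) :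
    zmodAddEquivOfGenerator (mem_zmultiples_one (R := R)) hn (a * b) =
      zmodAddEquivOfGenerator mem_zmultiples_one hn a *
        zmodAddEquivOfGenerator mem_zmultiples_one hn b := by
  obtain ⟨k, rfl⟩ := ZMod.intCast_surjective a
  obtain ⟨l, rfl⟩ := ZMod.intCast_surjective b
  simp only [← Int.cast_mul, zmodAddEquivOfGenerator_apply_intCast, zsmul_one_mul_zsmul_one]

/-- The isomorphism from `ZMod n` to a nearring with cyclic additive group of cardinality `n`,
sending `1` to `1`. As `Nat.card` of an infinite type is `0` and `ZMod 0 = ℤ`, the case `n = 0`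
identifies an infinite such nearring with `ℤ`. -/
noncomputable def zmodRingEquiv [IsAddCyclic R] {n : ℕ} (hn : Nat.card R = n) : ZMod n ≃+* R where
  __ := zmodAddEquivOfGenerator mem_zmultiples_one hn
  map_mul' := zmodAddEquivOfGenerator_mul hn

end NearringWithOne

theorem cyclic_case_iso_zmod_general {R : Type*} [NearringWithOne R] [IsAddCyclic R] {n : ℕ}
    (hn : Nat.card R = n) :
    (∀ x y : R, x * y = y * x) ∧
    (∀ x y z : R, (x + y) * z = x * z + y * z) ∧
    ∃ f : R → ZMod n, Function.Bijective f ∧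
      (∀ x y : R, f (x + y) = f x + f y) ∧ (∀ x y : R, f (x * y) = f x * f y) :=
  let f := (NearringWithOne.zmodRingEquiv hn).symm
  ⟨NearringWithOne.mul_comm, NearringWithOne.add_mul, f, f.bijective, map_add f, map_mul f⟩

/-- A local nearring of order `p^n` (`n > 1`) with cyclic non-trivial subgroup of
non-invertible elements and cyclic additive group is a commutative ring isomorphic
to `ℤ/pⁿℤ`. -/
theorem cyclic_case_iso_zmod (p n : ℕ) (hp : p.Prime) (hn : 1 < n)
    (R : Type*) [NearringWithOne R] [Fintype R] (hcard : Fintype.card R = p ^ n)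
    (L : AddSubgroup R) (hL : ∀ x : R, x ∈ L ↔ ¬ IsUnit x)
    (hLcyc : IsAddCyclic L) (hLne : L ≠ ⊥) (hRcyc : IsAddCyclic R) :
    (∀ x y : R, x * y = y * x) ∧
    (∀ x y z : R, (x + y) * z = x * z + y * z) ∧
    ∃ f : R → ZMod (p ^ n), Function.Bijective f ∧
      (∀ x y : R, f (x + y) = f x + f y) ∧ (∀ x y : R, f (x * y) = f x * f y) := by
  exact cyclic_case_iso_zmod_general (Nat.card_eq_fintype_card.trans hcard)
end

section
/- Let p be a prime and let R be a local nearring of order p⁴ whose additive group R⁺ is non-abelian and which is not a nearfield. Then the subgroup L of non-invertible elements of R is a non-cyclic group whose order is p³ or p². -/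
/-! Left multiplication by units makes the additive automorphisms of `R` that preserve `L`
transitive on the complement of `L`. So a characteristic subgroup of `R⁺` lies in `L` or is
everything, and `L` contains the centre, the commutators and the `p`-th powers. If `L` had order at
most `p`, so would both the centre and the commutator subgroup, which no group of order `p ^ 4`
allows. The additive order of a unit is a multiple of every additive order. For cyclic `L` we
contradict this with a product `x * v` (written multiplicatively) outside `L` in which the `p`-th
powers of `x` and `v` cancel, so that `(x * v) ^ p` is a power of `⁅v, x⁆`. When `L` has order
`p ^ 2` it is moreover central: its centralizer has index at most `φ (p ^ 2) < p ^ 2`, hence is not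
contained in `L`. -/

open Subgroup
open scoped commutatorElement

section Commutator

variable {G : Type*} [Group G] {x v : G}

theorem commutatorElement_pow_left (hv : Commute ⁅v, x⁆ v) (n : ℕ) :
    ⁅v ^ n, x⁆ = ⁅v, x⁆ ^ n := by
  have hconj : x * v⁻¹ * x⁻¹ = v⁻¹ * ⁅v, x⁆ := by rw [commutatorElement_def]; group
  have hcomm : Commute v (x * v⁻¹ * x⁻¹) :=
    hconj ▸ (Commute.refl v).inv_right.mul_right hv.symm
  calc ⁅v ^ n, x⁆ = v ^ n * (x * v⁻¹ * x⁻¹) ^ n := by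
        rw [conj_pow, commutatorElement_def, inv_pow, mul_assoc, mul_assoc, mul_assoc]
    _ = ⁅v, x⁆ ^ n := by rw [← hcomm.mul_pow, hconj, mul_inv_cancel_left]

theorem mul_pow_of_commute_commutatorElement (hx : Commute ⁅v, x⁆ x) (hv : Commute ⁅v, x⁆ v)
    (n : ℕ) : (x * v) ^ n = x ^ n * v ^ n * ⁅v, x⁆ ^ n.choose 2 := by
  induction n with
  | zero => simp
  | succ n ih =>
    have hswap : v ^ n * x = x * v ^ n * ⁅v, x⁆ ^ n := by
      rw [← ((hx.pow_left n).mul_right (hv.pow_pow n n)).eq, ← commutatorElement_pow_left hv,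
        commutatorElement_def]
      group
    calc (x * v) ^ (n + 1)
        = x ^ n * v ^ n * (⁅v, x⁆ ^ n.choose 2 * (x * v)) := by rw [pow_succ, ih, mul_assoc]
      _ = x ^ n * (v ^ n * x) * v * ⁅v, x⁆ ^ n.choose 2 := by
          rw [((hx.mul_right hv).pow_left _).eq]; simp only [mul_assoc]
      _ = x ^ n * x * v ^ n * (⁅v, x⁆ ^ n * v) * ⁅v, x⁆ ^ n.choose 2 := by
          rw [hswap]; simp only [mul_assoc]
      _ = x ^ (n + 1) * v ^ (n + 1) * ⁅v, x⁆ ^ (n + 1).choose 2 := by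
          rw [(hv.pow_left n).eq, Nat.choose_succ_succ' n 1, Nat.choose_one_right, pow_succ x,
            pow_succ v, pow_add]
          simp only [mul_assoc]

theorem mul_pow_sq_eq_one_of_mul_pow_eq_one (hx : Commute ⁅v, x⁆ x) (hv : Commute ⁅v, x⁆ v) {n : ℕ}
    (h : x ^ n * v ^ n = 1) : (x * v) ^ (n ^ 2) = 1 := by
  have hvn : Commute (v ^ n) x := by
    rw [← inv_eq_of_mul_eq_one_right h]
    exact ((Commute.refl x).pow_left n).inv_left
  have hcn : ⁅v, x⁆ ^ n = 1 := by
    rw [← commutatorElement_pow_left hv, commutatorElement_eq_one_iff_commute.mpr hvn]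
  rw [sq, pow_mul, mul_pow_of_commute_commutatorElement hx hv, h, one_mul, pow_right_comm, hcn,
    one_pow]

end Commutator

section Centralizer

variable {G : Type*} [Group G]

theorem index_centralizer_singleton_le_card_commutator [Finite (commutator G)] (x : G) :
    (centralizer {x}).index ≤ Nat.card (commutator G) := by
  have hsub : commutatorSet G ⊆ commutator G := commutator_eq_closure G ▸ subset_closure
  exact Nat.card_le_card_of_injective _
    ((Set.inclusion_injective hsub).comp (quotientCentralizerEmbedding x).injective)

theorem index_centralizer_dvd_totient_card (H : Subgroup G) [H.Normal] [Finite H] [IsCyclic H] :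
    (centralizer (H : Set G)).index ∣ (Nat.card H).totient := by
  have hker : centralizer (H : Set G) = (MulAut.conjNormal : G →* MulAut H).ker := by
    ext g
    simp [mem_centralizer_iff, MonoidHom.mem_ker, MulEquiv.ext_iff, Subtype.ext_iff,
      eq_mul_inv_iff_mul_eq, eq_comm]
  rw [hker, index_ker, ← IsCyclic.card_mulAut]
  exact card_subgroup_dvd_card _

end Centralizer

theorem exists_mem_zpowers_pow_eq {G : Type*} [Group G] {a g : G} {n : ℕ}
    (hg : g ∈ zpowers (a ^ n)) : ∃ v ∈ zpowers a, v ^ n = g := by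
  obtain ⟨r, rfl⟩ := mem_zpowers_iff.mp hg
  exact ⟨a ^ r, zpow_mem_zpowers a r, by rw [← zpow_natCast, zpow_comm, zpow_natCast]⟩

section PGroup

variable {G : Type*} [Group G] {p : ℕ} [Fact p.Prime]

theorem isMulCommutative_of_index_center_lt_sq (hG : IsPGroup p G) [(center G).FiniteIndex]
    (h : (center G).index < p ^ 2) : IsMulCommutative G := by
  have hp : p.Prime := Fact.out
  obtain ⟨k, hk⟩ := hG.index (center G)
  have hk1 : k ≤ 1 := Nat.le_of_lt_succ ((Nat.pow_lt_pow_iff_right hp.one_lt).mp (hk ▸ h))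
  have : IsCyclic (G ⧸ center G) := by
    refine isCyclic_of_card_dvd_prime (p := p) ?_
    rw [← index_eq_card, hk]
    exact (pow_dvd_pow p hk1).trans (pow_one p).dvd
  exact isMulCommutative_of_isCyclic_quotient_center_self G

theorem isMulCommutative_centralizer_of_index_center_le (hG : IsPGroup p G)
    [(center G).FiniteIndex] (hZ : (center G).index ≤ p ^ 3) {z : G} (hz : z ∉ center G) :
    IsMulCommutative (centralizer {z}) := by
  set C := centralizer {z}
  have hZC : center G ≤ C := center_le_centralizer _
  have hlt : (center G).subgroupOf C < center C := by
    refine lt_of_le_of_ne (fun c hc => mem_center_iff.mpr fun g => ?_) fun h => hz ?_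
    · exact Subtype.ext (mem_center_iff.mp hc g)
    · have hzC : (⟨z, mem_centralizer_singleton_iff.mpr rfl⟩ : C) ∈ center C :=
        mem_center_iff.mpr fun g => Subtype.ext (mem_centralizer_singleton_iff.mp g.2)
      exact (h ▸ hzC : _ ∈ (center G).subgroupOf C)
  have hC1 : C.index ≠ 1 := fun h => hz <| mem_center_iff.mpr fun g =>
    mem_centralizer_singleton_iff.mp (index_eq_one.mp h ▸ mem_top g : g ∈ C)
  have : C.FiniteIndex := finiteIndex_of_le hZC
  have hpC : p ≤ C.index := by
    obtain ⟨k, hk⟩ := hG.index C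
    rw [hk] at hC1 ⊢
    exact Nat.le_self_pow (by rintro rfl; exact hC1 (pow_zero p)) p
  have hrel : (center G).relIndex C ≤ p ^ 2 := by
    refine Nat.le_of_mul_le_mul_right ?_ (Fact.out : p.Prime).pos
    calc (center G).relIndex C * p ≤ (center G).relIndex C * C.index := by gcongr
      _ ≤ p ^ 2 * p := by rwa [relIndex_mul_index hZC, ← pow_succ]
  have : (center C).FiniteIndex := finiteIndex_of_le hlt.le
  exact isMulCommutative_of_index_center_lt_sq (hG.to_subgroup C)
    ((index_strictAnti hlt).trans_le hrel)

theorem index_center_ne_pow_three_of_card_commutator_le (hG : IsPGroup p G)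
    [Finite (commutator G)] (hcomm : Nat.card (commutator G) ≤ p) :
    (center G).index ≠ p ^ 3 := by
  intro hZ
  have hp : p.Prime := Fact.out
  have : (center G).FiniteIndex := ⟨hZ ▸ pow_ne_zero 3 hp.ne_zero⟩
  have hcommute (x y : G) : y * x = x * y := by
    -- The centralizers of `x` and `y` have index at most `p`, so they share a non-central `z`,
    -- and the centralizer of `z` is abelian.
    let E := centralizer {x} ⊓ centralizer {y}
    have hE : E.index ≤ p ^ 2 := calc
      E.index ≤ (centralizer {x}).index * (centralizer {y}).index := index_inf_le
      _ ≤ p * p := Nat.mul_le_mul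
          ((index_centralizer_singleton_le_card_commutator x).trans hcomm)
          ((index_centralizer_singleton_le_card_commutator y).trans hcomm)
      _ = p ^ 2 := (sq p).symm
    have : E.FiniteIndex :=
      finiteIndex_of_le (le_inf (center_le_centralizer _) (center_le_centralizer _))
    obtain ⟨z, ⟨hzx, hzy⟩, hz⟩ : ∃ z ∈ E, z ∉ center G := by
      refine SetLike.not_le_iff_exists.mp fun hle => ?_
      have hlt : p ^ 2 < p ^ 3 := Nat.pow_lt_pow_right hp.one_lt (by norm_num)
      exact (hlt.trans_le (hZ ▸ index_antitone hle)).not_ge hE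
    have := isMulCommutative_centralizer_of_index_center_le hG hZ.le hz
    have hx : x ∈ centralizer {z} :=
      mem_centralizer_singleton_iff.mpr (mem_centralizer_singleton_iff.mp hzx).symm
    have hy : y ∈ centralizer {z} :=
      mem_centralizer_singleton_iff.mpr (mem_centralizer_singleton_iff.mp hzy).symm
    exact congrArg Subtype.val (mul_comm' (⟨y, hy⟩ : centralizer {z}) ⟨x, hx⟩)
  have htop : center G = ⊤ :=
    eq_top_iff.mpr fun x _ => mem_center_iff.mpr fun y => hcommute x y
  rw [htop, index_top] at hZ
  exact (Nat.one_lt_pow (by norm_num) hp.one_lt).ne hZ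

theorem lt_card_center_or_lt_card_commutator (hcard : Nat.card G = p ^ 4) :
    p < Nat.card (center G) ∨ p < Nat.card (commutator G) := by
  have hp : p.Prime := Fact.out
  have : Finite G := Nat.finite_of_card_ne_zero (hcard ▸ pow_ne_zero 4 hp.ne_zero)
  have hG : IsPGroup p G := IsPGroup.of_card hcard
  by_contra! ⟨hcenter, hcomm⟩
  have : Nontrivial G :=
    Finite.one_lt_card_iff_nontrivial.mp (hcard ▸ Nat.one_lt_pow (by norm_num) hp.one_lt)
  have : Nontrivial (center G) := hG.center_nontrivial
  obtain ⟨n, hn, hcardZ⟩ := (hG.to_subgroup (center G)).nontrivial_iff_card.mp this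
  have hcardZ' : Nat.card (center G) = p :=
    hcenter.antisymm (hcardZ ▸ Nat.le_self_pow hn.ne' p)
  refine index_center_ne_pow_three_of_card_commutator_le hG hcomm ?_
  refine Nat.eq_of_mul_eq_mul_left hp.pos ?_
  calc p * (center G).index = Nat.card (center G) * (center G).index := by rw [hcardZ']
    _ = p * p ^ 3 := by rw [card_mul_index, hcard, ← pow_succ']

theorem zpowers_eq_or_mem_zpowers_pow (hG : IsPGroup p G) {a g : G} (hg : g ∈ zpowers a) :
    zpowers g = zpowers a ∨ g ∈ zpowers (a ^ p) := by
  have hp : p.Prime := Fact.out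
  obtain ⟨j, rfl⟩ := (hG.isOfFinOrder hp.ne_zero a).mem_powers_iff_mem_zpowers.mpr hg
  by_cases hj : p ∣ j
  · obtain ⟨m, rfl⟩ := hj
    exact Or.inr (by simpa only [pow_mul] using npow_mem_zpowers (a ^ p) m)
  · have hcoprime := hG.orderOf_coprime ((hp.coprime_iff_not_dvd).mpr hj) a
    refine Or.inl (le_antisymm (zpowers_le.mpr hg) (zpowers_le.mpr ?_))
    exact mem_zpowers_pow_iff.mpr hcoprime.symm

theorem zpowers_pow_eq_zpowers_pow_of_index_eq_prime (hG : IsPGroup p G) (hcyc : ¬ IsCyclic G)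
    {a x : G} [(zpowers a).Normal] (hindex : (zpowers a).index = p) (hx : x ∉ zpowers a)
    (hp2 : p ^ 2 ∣ orderOf a) (hord : orderOf a ∣ orderOf x) :
    zpowers (x ^ p) = zpowers (a ^ p) := by
  have hp : p.Prime := Fact.out
  have hxp : x ^ p ∈ zpowers (a ^ p) := by
    refine (zpowers_eq_or_mem_zpowers_pow hG (hindex ▸ pow_index_mem _ x)).resolve_left fun h => ?_
    have hle : zpowers a ≤ zpowers x := h ▸ zpowers_le.mpr (npow_mem_zpowers x p)
    rcases (Nat.dvd_prime hp).mp (hindex ▸ index_dvd_of_le hle) with h1 | h1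
    · exact hcyc (isCyclic_iff_exists_zpowers_eq_top.mpr ⟨x, index_eq_one.mp h1⟩)
    · have : (zpowers a).FiniteIndex := ⟨hindex ▸ hp.ne_zero⟩
      have heq : zpowers a = zpowers x :=
        hle.eq_of_not_lt fun hlt => (index_strictAnti hlt).ne (h1.trans hindex.symm)
      exact hx (heq ▸ mem_zpowers x)
  refine (zpowers_eq_or_mem_zpowers_pow hG hxp).resolve_right fun h => ?_
  obtain ⟨m, hm⟩ := hp2
  have hxpm : x ^ (p * m) = 1 := by
    rw [pow_mul, ← orderOf_dvd_iff_pow_eq_one]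
    refine (orderOf_dvd_of_mem_zpowers h).trans (orderOf_dvd_of_pow_eq_one ?_)
    rw [← pow_mul, ← pow_mul, ← mul_assoc, ← sq, ← hm, pow_orderOf_eq_one]
  have hpos : 0 < p * m := by
    have ha := orderOf_pos_iff.mpr (hG.isOfFinOrder hp.ne_zero a)
    exact Nat.mul_pos hp.pos (Nat.pos_of_mul_pos_left (hm ▸ ha))
  have hle : p * (p * m) ≤ p * m := by
    rw [← mul_assoc, ← sq, ← hm]
    exact Nat.le_of_dvd hpos (hord.trans (orderOf_dvd_of_pow_eq_one hxpm))
  exact hle.not_gt ((Nat.lt_mul_iff_one_lt_left hpos).mpr hp.one_lt)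

theorem exists_notMem_zpowers_pow_sq_eq_one (hG : IsPGroup p G) {a x : G} [(zpowers a).Normal]
    (ha : a ^ p ≠ 1) (hx : x ∉ zpowers a) (hxa : zpowers (x ^ p) = zpowers (a ^ p)) :
    ∃ y ∉ zpowers a, y ^ p ^ 2 = 1 := by
  have hcomm {g : G} (hg : g ∈ zpowers (a ^ p)) : Commute g x := by
    obtain ⟨k, rfl⟩ := mem_zpowers_iff.mp (hxa ▸ hg)
    exact ((Commute.refl x).pow_left p).zpow_left k
  obtain ⟨v, hv, hvp⟩ : ∃ v ∈ zpowers a, v ^ p = (x ^ p)⁻¹ :=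
    exists_mem_zpowers_pow_eq (inv_mem (hxa ▸ mem_zpowers (x ^ p)))
  have hc : ⁅v, x⁆ ∈ zpowers a := commutator_le_left _ ⊤ (commutator_mem_commutator hv (mem_top x))
  have hcv : Commute ⁅v, x⁆ v := setLike_mul_comm hc hv
  have hcp : ⁅v, x⁆ ^ p = 1 := by
    rw [← commutatorElement_pow_left hcv, commutatorElement_eq_one_iff_commute, hvp]
    exact ((Commute.refl x).pow_left p).inv_left
  have hcx : Commute ⁅v, x⁆ x := by
    refine hcomm ((zpowers_eq_or_mem_zpowers_pow hG hc).resolve_left fun h => ha ?_)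
    rw [← orderOf_dvd_iff_pow_eq_one] at hcp ⊢
    exact (orderOf_dvd_of_mem_zpowers (h ▸ mem_zpowers a)).trans hcp
  refine ⟨x * v, fun h => hx ((mul_mem_cancel_right hv).mp h), ?_⟩
  exact mul_pow_sq_eq_one_of_mul_pow_eq_one hcx hcv (by rw [hvp, mul_inv_cancel])

theorem not_isCyclic_of_index_eq_prime (hG : IsPGroup p G) (hcyc : ¬ IsCyclic G) {H : Subgroup G}
    [H.Normal] (hindex : H.index = p) (hcard : p ^ 3 ∣ Nat.card H)
    (hord : ∀ h ∈ H, ∀ x ∉ H, orderOf h ∣ orderOf x) : ¬ IsCyclic H := by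
  have hp : p.Prime := Fact.out
  rw [H.isCyclic_iff_exists_zpowers_eq_top]
  rintro ⟨a, rfl⟩
  rw [Nat.card_zpowers] at hcard
  have horda := hord a (mem_zpowers a)
  obtain ⟨x, hx⟩ : ∃ x, x ∉ zpowers a := by
    by_contra! h
    exact hp.ne_one (hindex.symm.trans (index_eq_one.mpr (eq_top_iff.mpr fun x _ => h x)))
  have hxa : zpowers (x ^ p) = zpowers (a ^ p) :=
    zpowers_pow_eq_zpowers_pow_of_index_eq_prime hG hcyc hindex hx
      ((pow_dvd_pow p (by norm_num)).trans hcard) (horda x hx)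
  have not_dvd {k : ℕ} (hk : k < 3) : ¬ orderOf a ∣ p ^ k := fun h =>
    hk.not_ge ((Nat.pow_dvd_pow_iff_le_right hp.one_lt).mp (hcard.trans h))
  have hap : a ^ p ≠ 1 := fun h =>
    not_dvd (k := 1) (by norm_num) ((pow_one p).symm ▸ orderOf_dvd_of_pow_eq_one h)
  obtain ⟨y, hy, hyp⟩ := exists_notMem_zpowers_pow_sq_eq_one hG hap hx hxa
  exact not_dvd (k := 2) (by norm_num) ((horda y hy).trans (orderOf_dvd_of_pow_eq_one hyp))

theorem zpowers_pow_eq_zpowers_of_le_center (hG : IsPGroup p G) {a x : G}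
    (hcenter : zpowers a ≤ center G) (ha : a ^ p ≠ 1)
    (hord : ∀ y ∉ zpowers a, orderOf a ∣ orderOf y) (hx : x ∉ zpowers a) (hxp : x ^ p ∈ zpowers a) :
    zpowers (x ^ p) = zpowers a := by
  refine (zpowers_eq_or_mem_zpowers_pow hG hxp).resolve_right fun h => ha ?_
  obtain ⟨v, hv, hvp⟩ : ∃ v ∈ zpowers a, v ^ p = (x ^ p)⁻¹ :=
    exists_mem_zpowers_pow_eq (inv_mem h)
  have hxv : (x * v) ^ p = 1 := by
    rw [Commute.mul_pow (mem_center_iff.mp (hcenter hv) x), hvp, mul_inv_cancel]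
  rw [← orderOf_dvd_iff_pow_eq_one] at hxv ⊢
  exact (hord _ fun h => hx ((mul_mem_cancel_right hv).mp h)).trans hxv

theorem isMulCommutative_of_zpowers_le_center (hG : IsPGroup p G) {a : G}
    (hcenter : zpowers a ≤ center G) (hcomm : commutator G ≤ zpowers a)
    (hpow : ∀ x : G, x ^ p ∈ zpowers a) (ha : a ^ p ≠ 1)
    (hord : ∀ y ∉ zpowers a, orderOf a ∣ orderOf y) : IsMulCommutative G := by
  rw [isMulCommutative_iff]
  by_contra! ⟨x, y, hxy⟩
  have zpowers_pow {z : G} (hz : z ∉ zpowers a) : zpowers (z ^ p) = zpowers a :=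
    zpowers_pow_eq_zpowers_of_le_center hG hcenter ha hord hz (hpow z)
  have hx : x ∉ zpowers a := fun h => hxy (mem_center_iff.mp (hcenter h) y).symm
  obtain ⟨v, hv, hvp⟩ : ∃ v ∈ zpowers x, v ^ p = (y ^ p)⁻¹ :=
    exists_mem_zpowers_pow_eq (inv_mem (zpowers_pow hx ▸ hpow y))
  have hxv : Commute x v := setLike_mul_comm (mem_zpowers x) hv
  have hcmem : ⁅v, y⁆ ∈ commutator G := commutator_mem_commutator (mem_top v) (mem_top y)
  have hc (g : G) : Commute ⁅v, y⁆ g := (mem_center_iff.mp (hcenter (hcomm hcmem)) g).symm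
  have hyv : y * v ∉ zpowers a := fun h => by
    have hxyv : Commute x (y * v) := mem_center_iff.mp (hcenter h) x
    have hyvv : Commute x (y * v * v⁻¹) := hxyv.mul_right hxv.inv_right
    exact hxy (mul_inv_cancel_right y v ▸ hyvv)
  have hyv1 : ((y * v) ^ p) ^ p = 1 := by
    rw [← pow_mul, ← sq]
    exact mul_pow_sq_eq_one_of_mul_pow_eq_one (hc y) (hc v) (by rw [hvp, mul_inv_cancel])
  rw [← orderOf_dvd_iff_pow_eq_one, ← Nat.card_zpowers, zpowers_pow hyv, Nat.card_zpowers,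
    orderOf_dvd_iff_pow_eq_one] at hyv1
  exact ha hyv1

end PGroup

/-- Automorphisms of `G` preserving the proper subgroup `H` act transitively on the complement of
`H`. For a local nearring this holds with `G` the additive group and `H` the set of non-units. -/
structure AutTransitiveOnCompl {G : Type*} [Group G] (H : Subgroup G) : Prop where
  ne_top : H ≠ ⊤
  exists_mulEquiv : ∀ ⦃x y : G⦄, x ∉ H → y ∉ H →
    ∃ φ : G ≃* G, φ x = y ∧ ∀ g, φ g ∈ H ↔ g ∈ H

namespace AutTransitiveOnCompl

variable {G : Type*} [Group G] {H : Subgroup G} {p : ℕ}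

theorem le_or_eq_top (hH : AutTransitiveOnCompl H) {K : Subgroup G}
    (hK : ∀ φ : G ≃* G, (∀ g, φ g ∈ H ↔ g ∈ H) → ∀ g ∈ K, φ g ∈ K) : K ≤ H ∨ K = ⊤ := by
  refine or_iff_not_imp_left.mpr fun hle => eq_top_iff.mpr fun g _ => ?_
  obtain ⟨x, hxK, hxH⟩ := SetLike.not_le_iff_exists.mp hle
  have mem_of_notMem {y : G} (hy : y ∉ H) : y ∈ K := by
    obtain ⟨φ, rfl, hφ⟩ := hH.exists_mulEquiv hxH hy
    exact hK φ hφ x hxK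
  by_cases hg : g ∈ H
  · exact (mul_mem_cancel_right hxK).mp (mem_of_notMem fun h => hxH ((mul_mem_cancel_left hg).mp h))
  · exact mem_of_notMem hg

theorem le_or_eq_top_of_characteristic (hH : AutTransitiveOnCompl H) (K : Subgroup G)
    [K.Characteristic] : K ≤ H ∨ K = ⊤ :=
  hH.le_or_eq_top fun φ _ _ hg => characteristic_iff_le_comap.mp inferInstance φ hg

theorem center_le (hH : AutTransitiveOnCompl H) (hG : ¬ IsMulCommutative G) : center G ≤ H :=
  (hH.le_or_eq_top_of_characteristic _).resolve_right fun h =>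
    hG (isMulCommutative_iff.mpr fun x y => (mem_center_iff.mp (h ▸ mem_top x) y).symm)

theorem commutator_le [Group.IsSolvable G] (hH : AutTransitiveOnCompl H) : commutator G ≤ H := by
  have : Nontrivial G := nontrivial_iff.mp ⟨H, ⊤, hH.ne_top⟩
  exact (hH.le_or_eq_top_of_characteristic _).resolve_right
    (Group.IsSolvable.commutator_lt_top_of_nontrivial G).ne

theorem pow_mem (hH : AutTransitiveOnCompl H) (hG : IsPGroup p G) (x : G) : x ^ p ∈ H := by
  by_contra hxp
  have hx : x ∉ H := fun h => hxp (Subgroup.pow_mem H h p)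
  have notMem (k : ℕ) : x ^ p ^ k ∉ H := by
    induction k with
    | zero => rwa [pow_zero, pow_one]
    | succ k ih =>
      obtain ⟨φ, hφx, hφ⟩ := hH.exists_mulEquiv hx ih
      rwa [pow_succ, pow_mul, ← hφx, ← map_pow, hφ]
  obtain ⟨k, hk⟩ := hG x
  exact notMem k (hk ▸ one_mem H)

theorem lt_card [Fact p.Prime] (hH : AutTransitiveOnCompl H) (hcard : Nat.card G = p ^ 4)
    (hG : ¬ IsMulCommutative G) : p < Nat.card H := by
  have : Finite G := Nat.finite_of_card_ne_zero (hcard ▸ pow_ne_zero 4 (Fact.out : p.Prime).ne_zero)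
  have := (IsPGroup.of_card hcard).isNilpotent
  rcases lt_card_center_or_lt_card_commutator hcard with h | h
  · exact h.trans_le (card_le_of_le (hH.center_le hG))
  · exact h.trans_le (card_le_of_le hH.commutator_le)

theorem le_center_of_isCyclic [Finite G] [H.Normal] [IsCyclic H] (hH : AutTransitiveOnCompl H)
    (hcard : Nat.card H ^ 2 ≤ Nat.card G) : H ≤ center G := by
  rcases eq_or_ne H ⊥ with rfl | hbot
  · exact bot_le
  rw [← SetLike.coe_subset_coe, ← centralizer_eq_top_iff_subset]
  refine (hH.le_or_eq_top fun φ hφ g hg => ?_).resolve_left fun hle => ?_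
  · refine mem_centralizer_iff.mpr fun h hh => ?_
    obtain ⟨k, rfl⟩ := φ.surjective h
    rw [← map_mul, ← map_mul, mem_centralizer_iff.mp hg k ((hφ k).mp hh)]
  · have hlt : H.index < Nat.card H := calc
      H.index ≤ (centralizer (H : Set G)).index := index_antitone hle
      _ ≤ (Nat.card H).totient :=
        Nat.le_of_dvd (Nat.totient_pos.mpr Nat.card_pos) (index_centralizer_dvd_totient_card H)
      _ < Nat.card H := Nat.totient_lt _ ((one_lt_card_iff_ne_bot H).mpr hbot)
    rw [← card_mul_index H, sq] at hcard
    exact hlt.not_ge (Nat.le_of_mul_le_mul_left hcard Nat.card_pos)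

theorem card_eq_pow_three_or_pow_two [Fact p.Prime] (hH : AutTransitiveOnCompl H)
    (hcard : Nat.card G = p ^ 4) (hG : ¬ IsMulCommutative G) :
    Nat.card H = p ^ 3 ∨ Nat.card H = p ^ 2 := by
  have hp : p.Prime := Fact.out
  have : Finite G := Nat.finite_of_card_ne_zero (hcard ▸ pow_ne_zero 4 hp.ne_zero)
  obtain ⟨k, hk, hkH⟩ := (Nat.dvd_prime_pow hp).mp (hcard ▸ card_subgroup_dvd_card H)
  have hk1 : 1 < k := by
    rw [← Nat.pow_lt_pow_iff_right hp.one_lt, pow_one, ← hkH]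
    exact hH.lt_card hcard hG
  have hk4 : k ≠ 4 := by
    rintro rfl
    exact hH.ne_top (H.card_eq_iff_eq_top.mp (hkH.trans hcard.symm))
  obtain rfl | rfl : k = 3 ∨ k = 2 := by lia
  exacts [Or.inl hkH, Or.inr hkH]

theorem not_isCyclic [Fact p.Prime] (hH : AutTransitiveOnCompl H)
    (hcard : Nat.card G = p ^ 4) (hG : ¬ IsMulCommutative G)
    (hord : ∀ h ∈ H, ∀ x ∉ H, orderOf h ∣ orderOf x) : ¬ IsCyclic H := by
  have hp : p.Prime := Fact.out
  have : Finite G := Nat.finite_of_card_ne_zero (hcard ▸ pow_ne_zero 4 hp.ne_zero)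
  have hpG : IsPGroup p G := IsPGroup.of_card hcard
  have := hpG.isNilpotent
  have : H.Normal := Normal.of_commutator_le G hH.commutator_le
  rcases hH.card_eq_pow_three_or_pow_two hcard hG with h3 | h2
  · have hindex : H.index = p := by
      refine Nat.eq_of_mul_eq_mul_left (pow_pos hp.pos 3) ?_
      rw [← h3, card_mul_index, hcard, h3, ← pow_succ]
    have hcyc : ¬ IsCyclic G := fun _ => hG inferInstance
    exact not_isCyclic_of_index_eq_prime hpG hcyc hindex h3.symm.dvd hord
  · intro hcycH
    have hcenter : H ≤ center G := hH.le_center_of_isCyclic (by rw [h2, hcard, ← pow_mul])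
    obtain ⟨a, rfl⟩ := H.isCyclic_iff_exists_zpowers_eq_top.mp hcycH
    have ha : a ^ p ≠ 1 := fun h => (hH.lt_card hcard hG).not_ge <|
      Nat.card_zpowers a ▸ orderOf_le_of_pow_eq_one hp.pos h
    exact hG <| isMulCommutative_of_zpowers_le_center hpG hcenter hH.commutator_le
      (hH.pow_mem hpG) ha (hord a (mem_zpowers a))

end AutTransitiveOnCompl

namespace NearringWithOne

variable {R : Type*} [NearringWithOne R]

instance inst_s8 : DistribMulAction R R where
  smul_zero x := left_eq_add.mp ((congrArg (x * ·) (add_zero 0)).symm.trans (left_distrib x 0 0))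
  smul_add := left_distrib

theorem addOrderOf_dvd_of_isUnit {x : R} (hx : IsUnit x) (y : R) :
    addOrderOf y ∣ addOrderOf x := by
  obtain ⟨u, rfl⟩ := hx
  refine addOrderOf_dvd_of_nsmul_eq_zero ?_
  calc addOrderOf (u : R) • y = addOrderOf (u : R) • ((y * ↑u⁻¹) • (u : R)) := by
        rw [smul_eq_mul, Units.inv_mul_cancel_right]
    _ = (y * ↑u⁻¹) • (addOrderOf (u : R) • (u : R)) := by rw [smul_comm]
    _ = 0 := by rw [addOrderOf_nsmul_eq_zero, smul_zero]

theorem autTransitiveOnCompl_toSubgroup {L : AddSubgroup R} (hL : ∀ x, x ∈ L ↔ ¬ IsUnit x) :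
    AutTransitiveOnCompl L.toSubgroup where
  ne_top h := by
    have h1 : Multiplicative.ofAdd (1 : R) ∈ L.toSubgroup := h ▸ mem_top _
    exact (hL 1).mp h1 isUnit_one
  exists_mulEquiv x y hx hy := by
    obtain ⟨u, hu⟩ : IsUnit x.toAdd := not_not.mp ((hL _).not.mp hx)
    obtain ⟨v, hv⟩ : IsUnit y.toAdd := not_not.mp ((hL _).not.mp hy)
    refine ⟨(DistribMulAction.toAddEquiv R (v * u⁻¹)).toMultiplicative, ?_, fun g => ?_⟩
    · change Multiplicative.ofAdd (↑(v * u⁻¹) * x.toAdd) = y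
      rw [← hu, Units.val_mul, Units.inv_mul_cancel_right, hv, ofAdd_toAdd]
    · change ↑(v * u⁻¹) * g.toAdd ∈ L ↔ g.toAdd ∈ L
      rw [hL, hL, Units.isUnit_units_mul]

end NearringWithOne

/-- If `R` is a local nearring of order `p⁴` with non-abelian additive group and
`R` is not a nearfield, then its subgroup `L` of non-invertible elements is a
non-cyclic group of order `p³` or `p²`. -/
theorem nonunits_noncyclic_order (p : ℕ) (hp : p.Prime)
    (R : Type*) [NearringWithOne R] [Fintype R] (hcard : Fintype.card R = p ^ 4)
    (L : AddSubgroup R) (hL : ∀ x : R, x ∈ L ↔ ¬ IsUnit x)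
    (hna : ∃ x y : R, x + y ≠ y + x) (hnf : L ≠ ⊥) :
    ¬ IsAddCyclic L ∧ (Nat.card L = p ^ 3 ∨ Nat.card L = p ^ 2) := by
  have : Fact p.Prime := ⟨hp⟩
  have hH := NearringWithOne.autTransitiveOnCompl_toSubgroup hL
  have hcardR : Nat.card (Multiplicative R) = p ^ 4 :=
    (Nat.card_eq_fintype_card (α := R)).trans hcard
  have hnaR : ¬ IsMulCommutative (Multiplicative R) := fun h =>
    hna.elim fun x ⟨y, hxy⟩ => hxy (isMulCommutative_iff.mp h x y)
  refine ⟨fun hcyc => ?_, hH.card_eq_pow_three_or_pow_two hcardR hnaR⟩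
  refine hH.not_isCyclic hcardR hnaR (fun h _ x hx => ?_) (isCyclic_multiplicative_iff.mpr hcyc)
  exact NearringWithOne.addOrderOf_dvd_of_isUnit (not_not.mp ((hL _).not.mp hx)) h
end

section
/- Let G be an additively written (not necessarily abelian) group and let a, b, c ∈ G satisfy a + b = b + a + c, a + c = c + a and b + c = c + b. Then for arbitrary integers k and l the equalities −(k•a) − (l•b) + k•a + l•b = (k·l)•c and l•b + k•a = −((k·l)•c) + k•a + l•b hold, where n•x denotes the n-th integer multiple of x in G. -/
section

variable {G : Type*} [AddGroup G] {a b c : G}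

theorem zsmul_add_eq_add_zsmul_add_zsmul (hab : a + b = b + a + c) (hac : AddCommute a c) (k : ℤ) :
    k • a + b = b + k • a + k • c := by
  -- Conjugation by `b` sends `a + c` to `a`, hence `k • (a + c) = k • a + k • c` to `k • a`.
  have hconj : AddSemiconjBy b (a + c) a := by rw [AddSemiconjBy, ← add_assoc, hab]
  rw [← (hconj.zsmul_right k).eq, hac.zsmul_add, add_assoc]

theorem add_zsmul_eq_zsmul_add_add_zsmul (hab : a + b = b + a + c) (hbc : AddCommute b c) (l : ℤ) :
    a + l • b = l • b + a + l • c := by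
  have hba : b + a = a + b + -c := eq_add_neg_of_add_eq hab.symm
  rw [zsmul_add_eq_add_zsmul_add_zsmul hba hbc.neg_right l, zsmul_neg, neg_add_cancel_right]

theorem zsmul_add_zsmul_eq_zsmul_add_zsmul_add (hab : a + b = b + a + c) (hac : AddCommute a c)
    (hbc : AddCommute b c) (k l : ℤ) :
    k • a + l • b = l • b + k • a + (k * l) • c := by
  have hkab : k • a + b = b + k • a + k • c := zsmul_add_eq_add_zsmul_add_zsmul hab hac k
  rw [add_zsmul_eq_zsmul_add_add_zsmul hkab (hbc.zsmul_right k) l, mul_zsmul']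

end

/-- In an additively written (not necessarily abelian) group with
`a + b = b + a + c`, `a + c = c + a`, `b + c = c + b`, for all integers `k, l` one has
`-(k•a) - (l•b) + k•a + l•b = (k*l)•c` and `l•b + k•a = -((k*l)•c) + k•a + l•b`. -/
theorem commutator_zsmul (G : Type*) [AddGroup G] (a b c : G)
    (hab : a + b = b + a + c) (hac : a + c = c + a) (hbc : b + c = c + b)
    (k l : ℤ) :
    -(k • a) - l • b + k • a + l • b = (k * l) • c ∧
    l • b + k • a = -((k * l) • c) + k • a + l • b := by
  have hswap : k • a + l • b = l • b + k • a + (k * l) • c :=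
    zsmul_add_zsmul_eq_zsmul_add_zsmul_add hab hac hbc k l
  have hcomm : AddCommute (l • b + k • a) ((k * l) • c) :=
    (AddCommute.zsmul_zsmul hbc l (k * l)).add_left (AddCommute.zsmul_zsmul hac k (k * l))
  constructor
  · rw [sub_eq_add_neg, ← neg_add_rev, add_assoc, neg_add_eq_iff_eq_add, hswap]
  · rw [add_assoc, eq_neg_add_iff_add_eq, hswap, hcomm.eq]
end

section
/- Let G be an additively written (not necessarily abelian) group and let a, b, c, d ∈ G satisfy a + b = b + a + c, a + c = c + a, b + c = c + b, a + d = d + a, b + d = d + b and c + d = d + c. Then for all natural numbers k, l, m, n and r one has r•(k•a + l•b + m•c + n•d) = (k·r)•a + (l·r)•b + (m·r − k·l·C(r,2))•c + (n·r)•d, where C(r,2) is the binomial coefficient r choose 2 and the coefficient of c is taken as an integer multiple. -/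
/-!
If `x + y = y + x + c` with `c` commuting with both `x` and `y`, moving one `x` past one `y`
produces one `c`. Hence `k • x + l • y` becomes `l • y + k • x` at the cost of `(k * l) • c`, and
`r • x + r • y` becomes `r • (x + y)` after `r.choose 2` such moves. The second fact applied to
`x = k • a`, `y = l • b`, whose own correction is `(k * l) • c` by the first, gives the formula.
Subtraction is avoided until the end, so the argument takes place in an additive monoid.
-/

section AddMonoid

variable {M : Type*} [AddMonoid M]

theorem nsmul_add_nsmul_eq_swap_add {x y c : M} (hxy : x + y = y + x + c)
    (hxc : AddCommute x c) (hyc : AddCommute y c) (k l : ℕ) :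
    k • x + l • y = l • y + k • x + (k * l) • c := by
  have hx : AddSemiconjBy x y (y + c) := by
    rw [AddSemiconjBy, hxy, add_assoc, add_assoc, hxc.eq]
  have hxl : x + l • y = l • y + (x + l • c) := by
    rw [(hx.nsmul_right l).eq, hyc.add_nsmul, add_assoc, (hxc.nsmul_right l).eq]
  have hy : AddSemiconjBy (l • y) (x + l • c) x := hxl.symm
  rw [← (hy.nsmul_right k).eq, (hxc.nsmul_right l).add_nsmul, add_assoc, mul_nsmul']

theorem nsmul_add_nsmul_eq_nsmul_add_add_choose {x y c : M} (hxy : x + y = y + x + c)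
    (hxc : AddCommute x c) (hyc : AddCommute y c) (r : ℕ) :
    r • x + r • y = r • (x + y) + r.choose 2 • c := by
  induction r with
  | zero => simp
  | succ r ih =>
    have hswap : x + r • y = r • y + x + r • c := by
      simpa using nsmul_add_nsmul_eq_swap_add hxy hxc hyc 1 r
    have hc (s : ℕ) : AddCommute (s • c) (x + y) := (hxc.add_left hyc).symm.nsmul_left s
    have hchoose : (r + 1).choose 2 = r.choose 2 + r := by
      rw [Nat.choose_succ_succ' r 1, Nat.choose_one_right, add_comm]
    calc (r + 1) • x + (r + 1) • y
        = r • x + (x + r • y) + y := by simp only [succ_nsmul, add_assoc]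
      _ = r • x + r • y + x + (r • c + y) := by rw [hswap]; simp only [add_assoc]
      _ = r • (x + y) + (r.choose 2 • c + (x + y)) + r • c := by
          rw [ih, (hyc.symm.nsmul_left r).eq]; simp only [add_assoc]
      _ = (r + 1) • (x + y) + (r + 1).choose 2 • c := by
          rw [(hc _).eq, hchoose, succ_nsmul, add_nsmul]; simp only [add_assoc]

theorem nsmul_formula_G4_general {a b c d : M} (hab : a + b = b + a + c)
    (hac : AddCommute a c) (hbc : AddCommute b c) (had : AddCommute a d)
    (hbd : AddCommute b d) (hcd : AddCommute c d) (k l m n r : ℕ) :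
    r • (k • a + l • b + m • c + n • d) + (k * l * r.choose 2) • c =
      (k * r) • a + (l * r) • b + (m * r) • c + (n * r) • d := by
  have habc : AddCommute (k • a + l • b) (m • c) :=
    ((hac.nsmul_left k).add_left (hbc.nsmul_left l)).nsmul_right m
  have habcd : AddCommute (k • a + l • b + m • c) (n • d) :=
    (((had.nsmul_left k).add_left (hbd.nsmul_left l)).add_left (hcd.nsmul_left m)).nsmul_right n
  have hsort : (k * r) • a + (l * r) • b = r • (k • a + l • b) + (k * l * r.choose 2) • c := by
    simpa only [mul_nsmul] using nsmul_add_nsmul_eq_nsmul_add_add_choose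
      (nsmul_add_nsmul_eq_swap_add hab hac hbc k l)
      ((hac.nsmul_left k).nsmul_right (k * l)) ((hbc.nsmul_left l).nsmul_right (k * l)) r
  have hcentral : AddCommute ((k * l * r.choose 2) • c) ((m * r) • c + (n * r) • d) :=
    (((AddCommute.refl c).nsmul_right _).add_right (hcd.nsmul_right _)).nsmul_left _
  calc r • (k • a + l • b + m • c + n • d) + (k * l * r.choose 2) • c
      = r • (k • a + l • b) + ((m * r) • c + (n * r) • d + (k * l * r.choose 2) • c) := by
        rw [habcd.add_nsmul, habc.add_nsmul, ← mul_nsmul, ← mul_nsmul]; simp only [add_assoc]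
    _ = (k * r) • a + (l * r) • b + (m * r) • c + (n * r) • d := by
        rw [← hcentral.eq, hsort]; simp only [add_assoc]

end AddMonoid

/-- In an additively written (not necessarily abelian) group with generators
`a, b, c, d` satisfying `a + b = b + a + c` and `c, d` central among them, the
`r`-th multiple of `k•a + l•b + m•c + n•d` is
`(k*r)•a + (l*r)•b + (m*r - k*l*C(r,2))•c + (n*r)•d`. -/
theorem nsmul_formula_G4 (G : Type*) [AddGroup G] (a b c d : G)
    (hab : a + b = b + a + c) (hac : a + c = c + a) (hbc : b + c = c + b)
    (had : a + d = d + a) (hbd : b + d = d + b) (hcd : c + d = d + c)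
    (k l m n r : ℕ) :
    r • (k • a + l • b + m • c + n • d) =
      (k * r) • a + (l * r) • b +
        ((m * r : ℤ) - (k : ℤ) * l * (r.choose 2)) • c + (n * r) • d := by
  have hcoeff : ((m * r : ℤ) - (k : ℤ) * l * (r.choose 2)) • c =
      (m * r) • c + -((k * l * r.choose 2) • c) := by
    rw [sub_zsmul]
    norm_cast
  have hcomm : AddCommute (-((k * l * r.choose 2) • c)) ((n * r) • d) :=
    ((AddCommute.nsmul_right hcd _).nsmul_left _).neg_left
  rw [eq_sub_of_add_eq (nsmul_formula_G4_general hab hac hbc had hbd hcd k l m n r), hcoeff]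
  simp only [sub_eq_add_neg, add_assoc, hcomm.eq]
end

section
/- Let p be a prime and let G be an additively written (not necessarily abelian) group with elements a, b, c satisfying p²•a = 0, −b + a + b = (1 − p)•a, a + c = c + a and b + c = c + b. Then for all natural numbers k, r and s the equality k•c + s•b + r•a = (r·(1 + s·p))•a + s•b + k•c holds. -/
/-!
Conjugation `g ↦ x + g - x` by `x = -b` sends `a` to `(1 - p) • a`. Since `p ^ 2 • a = 0`, the
multipliers satisfy `(1 + m * p) * (1 + n * p) ≡ 1 + (m + n) * p` on multiples of `a`, so composing
conjugations adds their first-order terms: conjugation by `s • b` sends `a` to `(1 + s * p) • a`,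
and hence `r • a` to `(r * (1 + s * p)) • a`. The element `c` commutes with both `a` and `b`.
-/

section FirstOrderConjugation

variable {G : Type*} [AddGroup G] {a x y : G} {m n q : ℤ}

theorem one_add_zsmul_one_add_zsmul (hmn : (m * n) • a = 0) :
    (1 + m) • (1 + n) • a = (1 + (m + n)) • a := by
  have expand : (1 + m) * (1 + n) = 1 + (m + n) + m * n := by ring
  rw [← mul_zsmul, expand, add_zsmul, hmn, add_zero]

theorem addSemiconjBy_add_one_add_zsmul (hmn : (m * n) • a = 0)
    (hx : AddSemiconjBy x a ((1 + m) • a)) (hy : AddSemiconjBy y a ((1 + n) • a)) :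
    AddSemiconjBy (x + y) a ((1 + (m + n)) • a) := by
  rw [add_comm m n, ← one_add_zsmul_one_add_zsmul (by rwa [mul_comm])]
  exact (hx.zsmul_right (1 + n)).add_left hy

theorem addSemiconjBy_neg_one_add_zsmul (hq : q ^ 2 • a = 0)
    (hx : AddSemiconjBy x a ((1 + q) • a)) : AddSemiconjBy (-x) a ((1 + -q) • a) := by
  have inverse : (1 + -q) • (1 + q) • a = a := by
    rw [one_add_zsmul_one_add_zsmul (by rw [neg_mul, ← sq, neg_zsmul, hq, neg_zero]),
      neg_add_cancel, add_zero, one_zsmul]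
  have h := hx.neg_symm_left.zsmul_right (1 + -q)
  rwa [inverse] at h

theorem addSemiconjBy_zsmul_one_add_zsmul (hq : q ^ 2 • a = 0)
    (hx : AddSemiconjBy x a ((1 + q) • a)) (s : ℤ) :
    AddSemiconjBy (s • x) a ((1 + s * q) • a) := by
  have mul_sq_zsmul (t : ℤ) : (t * q ^ 2) • a = 0 := by rw [mul_zsmul, hq, zsmul_zero]
  induction s with
  | zero => simp
  | succ s ih =>
    rw [add_one_zsmul, add_one_mul]
    exact addSemiconjBy_add_one_add_zsmul (by rw [mul_assoc, ← sq, mul_sq_zsmul]) ih hx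
  | pred s ih =>
    rw [sub_one_zsmul, sub_one_mul, sub_eq_add_neg (_ * q)]
    have cross : (-(s : ℤ) * q * -q) • a = 0 := by
      rw [show -(s : ℤ) * q * -q = s * q ^ 2 by ring, mul_sq_zsmul]
    exact addSemiconjBy_add_one_add_zsmul cross ih (addSemiconjBy_neg_one_add_zsmul hq hx)

end FirstOrderConjugation

theorem swap_formula_G5_general {G : Type*} [AddGroup G] {a b c : G} {p : ℤ}
    (ha : p ^ 2 • a = 0) (hab : -b + a + b = (1 - p) • a)
    (hac : a + c = c + a) (hbc : b + c = c + b) (k r s : ℤ) :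
    k • c + s • b + r • a = (r * (1 + s * p)) • a + s • b + k • c := by
  have neg_b_conj : AddSemiconjBy (-b) a ((1 + -p) • a) := by
    rw [← sub_eq_add_neg, ← hab, AddSemiconjBy, add_neg_cancel_right]
  have b_conj : AddSemiconjBy (s • b) a ((1 + s * p) • a) := by
    simpa using addSemiconjBy_zsmul_one_add_zsmul (by rwa [neg_sq]) neg_b_conj (-s)
  have swap_ba : s • b + r • a = (r * (1 + s * p)) • a + s • b := by
    rw [mul_zsmul]
    exact b_conj.zsmul_right r
  have comm_ca : AddCommute c a := hac.symm
  have comm_cb : AddCommute c b := hbc.symm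
  rw [add_assoc, swap_ba]
  exact ((comm_ca.zsmul_right _).add_right (comm_cb.zsmul_right s)).zsmul_left k

/-- In an additively written (not necessarily abelian) group with elements `a, b, c`
satisfying `p²•a = 0`, `-b + a + b = (1 - p)•a`, `a + c = c + a` and `b + c = c + b`,
one has `k•c + s•b + r•a = (r*(1 + s*p))•a + s•b + k•c` for all naturals `k, r, s`. -/
theorem swap_formula_G5 (p : ℕ) (hp : p.Prime) (G : Type*) [AddGroup G] (a b c : G)
    (ha : (p ^ 2) • a = 0) (hab : -b + a + b = ((1 : ℤ) - p) • a)
    (hac : a + c = c + a) (hbc : b + c = c + b)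
    (k r s : ℕ) :
    k • c + s • b + r • a = (r * (1 + s * p)) • a + s • b + k • c := by
  have ha' : (p : ℤ) ^ 2 • a = 0 := by exact_mod_cast ha
  exact_mod_cast swap_formula_G5_general ha' hab hac hbc k r s
end

section
/- Let p be a prime and let G be an additively written (not necessarily abelian) group with elements a, b, c satisfying p²•a = 0, −b + a + b = (1 − p)•a, a + c = c + a and b + c = c + b. Then for all natural numbers r, s, k and t the equality t•(r•a + s•b + k•c) = (r·(t + s·C(t,2)·p))•a + (s·t)•b + (k·t)•c holds, where C(t,2) is the binomial coefficient t choose 2. -/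
/-! Write `q = 1 + p`. Modulo `p ^ 2` the integers `1 - p` and `q` are inverse to each other, so the
relation `-b + a + b = (1 - p) • a` says that moving `b` to the right past `a` multiplies `a` by
`q`, and moving `s • b` past `r • a` multiplies `r • a` by `q ^ s`. Collecting the summands of
`t • (r • a + s • b)` therefore yields the geometric sum `∑ i < t, (q ^ s) ^ i` in front of `r • a`.
By the binomial theorem `q ^ (s * i) ≡ 1 + s * i * p` modulo `p ^ 2`, so this sum is congruent to
`t + s * C(t, 2) * p`. Since `c` commutes with `a` and `b`, the summand `k • c` splits off. -/

section AddMonoid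

variable {M : Type*} [AddMonoid M] {x y : M} {q : ℕ}

theorem addSemiconjBy_nsmul_pow_nsmul (h : AddSemiconjBy y x (q • x)) (n : ℕ) :
    AddSemiconjBy (n • y) x (q ^ n • x) := by
  induction n with
  | zero => simp
  | succ n ih =>
    have hy : AddSemiconjBy y (q ^ n • x) (q ^ (n + 1) • x) := by
      simpa only [pow_succ', mul_nsmul] using h.nsmul_right (q ^ n)
    rw [succ_nsmul']
    exact hy.add_left ih

theorem nsmul_add_eq_geom_sum_nsmul_add (h : AddSemiconjBy y x (q • x)) (t : ℕ) :
    t • (x + y) = (∑ i ∈ Finset.range t, q ^ i) • x + t • y := by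
  induction t with
  | zero => simp
  | succ t ih =>
    calc (t + 1) • (x + y)
        = (∑ i ∈ Finset.range t, q ^ i) • x + (t • y + x) + y := by
          simp only [succ_nsmul, ih, add_assoc]
      _ = (∑ i ∈ Finset.range t, q ^ i) • x + (q ^ t • x + t • y) + y := by
          rw [(addSemiconjBy_nsmul_pow_nsmul h t).eq]
      _ = (∑ i ∈ Finset.range (t + 1), q ^ i) • x + (t + 1) • y := by
          simp only [Finset.sum_range_succ, add_nsmul, succ_nsmul, add_assoc]

end AddMonoid

theorem one_add_pow_modEq_sq (p n : ℕ) : (1 + p) ^ n ≡ 1 + n * p [MOD p ^ 2] := by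
  have h : (p : ℤ) ^ 2 ∣ (1 + p) ^ n - (1 + n * p) := by
    simpa only [one_pow, one_mul, sub_sub, add_comm, mul_comm (n : ℤ)] using
      sq_dvd_add_pow_sub_sub (p : ℤ) 1 n
  exact (Nat.modEq_iff_dvd.mpr (mod_cast h)).symm

theorem geom_sum_one_add_pow_modEq_sq (p s t : ℕ) :
    ∑ i ∈ Finset.range t, ((1 + p) ^ s) ^ i ≡ t + s * t.choose 2 * p [MOD p ^ 2] := by
  calc ∑ i ∈ Finset.range t, ((1 + p) ^ s) ^ i
      ≡ ∑ i ∈ Finset.range t, (1 + s * i * p) [MOD p ^ 2] :=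
        Nat.ModEq.sum fun i _ ↦ by simpa only [pow_mul] using one_add_pow_modEq_sq p (s * i)
    _ = t + s * t.choose 2 * p := by
        rw [Finset.sum_add_distrib, Finset.sum_const, Finset.card_range, smul_eq_mul, mul_one,
          ← Finset.sum_mul, ← Finset.mul_sum, Finset.sum_range_id, Nat.choose_two_right]

theorem addSemiconjBy_one_add_nsmul {G : Type*} [AddGroup G] {a b : G} {p : ℕ}
    (ha : (p ^ 2) • a = 0) (hab : -b + a + b = ((1 : ℤ) - p) • a) :
    AddSemiconjBy b a ((1 + p) • a) := by
  have hba : AddSemiconjBy b (((1 : ℤ) - p) • a) a := by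
    rw [AddSemiconjBy, ← hab, add_assoc, add_neg_cancel_left]
  have hinv : (1 + p) • ((1 : ℤ) - p) • a = a := by
    have hmul : ((1 + p : ℕ) : ℤ) * (1 - p) = 1 - (p ^ 2 : ℕ) := by push_cast; ring
    rw [← natCast_zsmul, ← mul_zsmul, hmul, sub_zsmul, natCast_zsmul, ha, one_zsmul, neg_zero,
      add_zero]
  simpa only [hinv] using hba.nsmul_right (1 + p)

theorem nsmul_formula_G5_general {M : Type*} [AddMonoid M] {a b c : M} {p : ℕ}
    (ha : (p ^ 2) • a = 0) (hba : AddSemiconjBy b a ((1 + p) • a))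
    (hac : AddCommute a c) (hbc : AddCommute b c) (r s k t : ℕ) :
    t • (r • a + s • b + k • c) =
      (r * (t + s * t.choose 2 * p)) • a + (s * t) • b + (k * t) • c := by
  have hcomm : AddCommute (r • a + s • b) (k • c) :=
    ((hac.nsmul_left r).add_left (hbc.nsmul_left s)).nsmul_right k
  have hsr : AddSemiconjBy (s • b) (r • a) ((1 + p) ^ s • r • a) := by
    rw [nsmul_left_comm]
    exact (addSemiconjBy_nsmul_pow_nsmul hba s).nsmul_right r
  have hra : (p ^ 2) • r • a = 0 := by rw [nsmul_left_comm, ha, nsmul_zero]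
  calc t • (r • a + s • b + k • c)
      = t • (r • a + s • b) + t • k • c := hcomm.add_nsmul t
    _ = (∑ i ∈ Finset.range t, ((1 + p) ^ s) ^ i) • r • a + t • s • b + t • k • c := by
        rw [nsmul_add_eq_geom_sum_nsmul_add hsr]
    _ = (t + s * t.choose 2 * p) • r • a + t • s • b + t • k • c := by
        rw [nsmul_eq_nsmul_of_modEq (geom_sum_one_add_pow_modEq_sq p s t) hra]
    _ = (r * (t + s * t.choose 2 * p)) • a + (s * t) • b + (k * t) • c := by
        simp only [mul_nsmul]

/-- In an additively written (not necessarily abelian) group with elements `a, b, c`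
satisfying `p²•a = 0`, `-b + a + b = (1 - p)•a`, `a + c = c + a` and `b + c = c + b`,
one has `t•(r•a + s•b + k•c) = (r*(t + s*C(t,2)*p))•a + (s*t)•b + (k*t)•c`. -/
theorem nsmul_formula_G5 (p : ℕ) (hp : p.Prime) (G : Type*) [AddGroup G] (a b c : G)
    (ha : (p ^ 2) • a = 0) (hab : -b + a + b = ((1 : ℤ) - p) • a)
    (hac : a + c = c + a) (hbc : b + c = c + b)
    (r s k t : ℕ) :
    t • (r • a + s • b + k • c) =
      (r * (t + s * t.choose 2 * p)) • a + (s * t) • b + (k * t) • c :=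
  nsmul_formula_G5_general ha (addSemiconjBy_one_add_nsmul ha hab) hac hbc r s k t
end

section
/- Let p be a prime and let R be a left nearring with identity element a whose additive group contains elements b, c, d such that p•a = 0, p•b = 0, p•c = 0, p•d = 0, a + b = b + a + c, a + c = c + a, b + c = c + b, a + d = d + a, b + d = d + b, c + d = d + c. Let x ∈ R be written as x = x₁•a + x₂•b + x₃•c + x₄•d with integers x₁, x₂, x₃, x₄, and suppose x·b = α•a + β•b + γ•c + φ•d for integers α, β, γ, φ. Then x·c = (x₁·β − x₂·α)•c. -/
/-!
Left multiplication by `x` is an additive endomorphism. Applied to `a + b = b + a + c` with `a = 1`,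
it shows that `x * c` is the additive commutator of `x` and `x * b`. Since `c` commutes with `a` and
`b`, commutators of combinations of `a` and `b` are bilinear and alternating, and adding multiples
of `c` and `d` does not change them. So this commutator is `c` scaled by the determinant of the
`a`- and `b`-coordinates of `x` and `x * b`.
-/

/-- The relation `u + v = v + u + w`: the elements `u` and `v` commute up to `w`, which is then
their additive commutator `-u - v + u + v`. The equation keeps negatives out of calculations with
commutators. -/
def AddCommuteUpTo {G : Type*} [AddGroup G] (u v w : G) : Prop :=
  u + v = v + u + w

namespace AddCommuteUpTo

variable {G : Type*} [AddGroup G] {a b c u u' v v' w w' z : G}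

theorem unique (h : AddCommuteUpTo u v w) (h' : AddCommuteUpTo u v w') : w = w' :=
  add_left_cancel (Eq.trans (Eq.symm h) h')

theorem map {H : Type*} [AddGroup H] (f : G →+ H) (h : AddCommuteUpTo u v w) :
    AddCommuteUpTo (f u) (f v) (f w) := by
  simpa only [AddCommuteUpTo, map_add] using congrArg f h

theorem of_addCommute (h : AddCommute u v) : AddCommuteUpTo u v 0 :=
  h.eq.trans (add_zero _).symm

theorem symm (h : AddCommuteUpTo u v w) : AddCommuteUpTo v u (-w) :=
  eq_add_neg_of_add_eq (Eq.symm h)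

theorem addCommute_of_addCommute (h : AddCommuteUpTo u v w)
    (hzu : AddCommute z u) (hzv : AddCommute z v) : AddCommute z w := by
  have hw : -(v + u) + (u + v) = w := neg_add_eq_of_eq_add h
  exact hw ▸ (hzv.add_right hzu).neg_right.add_right (hzu.add_right hzv)

theorem add_left (h : AddCommuteUpTo u v w) (h' : AddCommuteUpTo u' v w')
    (hwu' : AddCommute w u') : AddCommuteUpTo (u + u') v (w + w') :=
  calc
    u + u' + v = u + (v + u' + w') := by rw [add_assoc, h']
    _ = u + v + u' + w' := by simp only [add_assoc]
    _ = v + u + (w + u') + w' := by rw [h, add_assoc (v + u)]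
    _ = v + (u + u') + (w + w') := by rw [hwu'.eq]; simp only [add_assoc]

theorem add_right (h : AddCommuteUpTo u v w) (h' : AddCommuteUpTo u v' w')
    (hwv' : AddCommute w v') : AddCommuteUpTo u (v + v') (w' + w) := by
  simpa only [neg_add_rev, neg_neg] using (h.symm.add_left h'.symm hwv'.neg_left).symm

theorem zsmul_left (h : AddCommuteUpTo u v w) (hwu : AddCommute w u) (n : ℤ) :
    AddCommuteUpTo (n • u) v (n • w) := by
  have hconj : AddSemiconjBy v (u + w) u := (add_assoc v u w).symm.trans (Eq.symm h)
  have hconj_zsmul := hconj.zsmul_right n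
  rw [hwu.symm.zsmul_add] at hconj_zsmul
  exact hconj_zsmul.eq.symm.trans (add_assoc _ _ _).symm

theorem zsmul_right (h : AddCommuteUpTo u v w) (hwv : AddCommute w v) (n : ℤ) :
    AddCommuteUpTo u (n • v) (n • w) := by
  simpa only [zsmul_neg, neg_neg] using (h.symm.zsmul_left hwv.neg_left n).symm

theorem add_addCommute_left (h : AddCommuteUpTo u v w)
    (hzu : AddCommute z u) (hzv : AddCommute z v) : AddCommuteUpTo (u + z) v w := by
  simpa only [add_zero] using
    h.add_left (of_addCommute hzv) (h.addCommute_of_addCommute hzu hzv).symm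

theorem add_addCommute_right (h : AddCommuteUpTo u v w)
    (hzu : AddCommute z u) (hzv : AddCommute z v) : AddCommuteUpTo u (v + z) w := by
  simpa only [neg_neg] using (h.symm.add_addCommute_left hzv hzu).symm

theorem zsmul_add_zsmul (h : AddCommuteUpTo a b c) (hca : AddCommute c a) (hcb : AddCommute c b)
    (i j k l : ℤ) :
    AddCommuteUpTo (i • a + j • b) (k • a + l • b) ((i * l - j * k) • c) := by
  have left_a : AddCommuteUpTo (i • a + j • b) a (j • -c) := by
    simpa only [zero_add] using
      (of_addCommute ((AddCommute.refl a).zsmul_left i)).add_left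
        (h.symm.zsmul_left hcb.neg_left j) (AddCommute.zero_left _)
  have left_b : AddCommuteUpTo (i • a + j • b) b (i • c) := by
    simpa only [add_zero] using
      (h.zsmul_left hca i).add_left (of_addCommute ((AddCommute.refl b).zsmul_left j))
        ((hcb.zsmul_left i).zsmul_right j)
  have left_add :
      AddCommuteUpTo (i • a + j • b) (k • a + l • b) (l • i • c + k • j • -c) :=
    (left_a.zsmul_right (hca.neg_left.zsmul_left j) k).add_right
      (left_b.zsmul_right (hcb.zsmul_left i) l)
      (((hcb.neg_left.zsmul_left j).zsmul_left k).zsmul_right l)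
  have coeff : l • i • c + k • j • -c = (i * l - j * k) • c := by
    rw [zsmul_neg, zsmul_neg, ← mul_zsmul', ← mul_zsmul', ← sub_zsmul]
  exact coeff ▸ left_add

theorem zsmul_add_zsmul_add (h : AddCommuteUpTo a b c)
    (hca : AddCommute c a) (hcb : AddCommute c b)
    (hza : AddCommute z a) (hzb : AddCommute z b) (hwa : AddCommute w a) (hwb : AddCommute w b)
    (hzw : AddCommute z w) (i j k l : ℤ) :
    AddCommuteUpTo (i • a + j • b + z) (k • a + l • b + w) ((i * l - j * k) • c) := by
  have comm_comb {y : G} (hya : AddCommute y a) (hyb : AddCommute y b) (m n : ℤ) :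
      AddCommute y (m • a + n • b) :=
    (hya.zsmul_right m).add_right (hyb.zsmul_right n)
  exact ((h.zsmul_add_zsmul hca hcb i j k l).add_addCommute_left
    (comm_comb hza hzb i j) (comm_comb hza hzb k l)).add_addCommute_right
      ((comm_comb hwa hwb i j).add_right hzw.symm) (comm_comb hwa hwb k l)

end AddCommuteUpTo

namespace NearringWithOne

variable {R : Type*} [NearringWithOne R]

theorem addCommuteUpTo_mul {b c : R} (h : AddCommuteUpTo 1 b c) (x : R) :
    AddCommuteUpTo x (x * b) (x * c) := by
  have h_map : AddCommuteUpTo (x * 1) (x * b) (x * c) := h.map (mulLeft x)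
  rwa [mul_one] at h_map

end NearringWithOne

theorem mul_c_formula_G4_general {R : Type*} [NearringWithOne R] {b c d : R}
    (h1b : AddCommuteUpTo 1 b c) (h1c : AddCommute 1 c) (hbc : AddCommute b c)
    (h1d : AddCommute 1 d) (hbd : AddCommute b d)
    {x : R} {x₁ x₂ x₃ x₄ : ℤ} (hx : x = x₁ • 1 + x₂ • b + x₃ • c + x₄ • d)
    {α β γ φ : ℤ} (hxb : x * b = α • 1 + β • b + γ • c + φ • d) :
    x * c = (x₁ * β - x₂ * α) • c := by
  have hdc : AddCommute d c := h1b.addCommute_of_addCommute h1d.symm hbd.symm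
  have comm_comb {y : R} (hyc : AddCommute y c) (hyd : AddCommute y d) (m n : ℤ) :
      AddCommute (m • c + n • d) y :=
    (hyc.symm.zsmul_left m).add_left (hyd.symm.zsmul_left n)
  have hcomb : AddCommute (x₃ • c + x₄ • d) (γ • c + φ • d) :=
    comm_comb (comm_comb (.refl c) hdc.symm γ φ) (comm_comb hdc (.refl d) γ φ) x₃ x₄
  have hcomm : AddCommuteUpTo x (x * b) ((x₁ * β - x₂ * α) • c) := by
    rw [hxb, hx, add_assoc _ (x₃ • c), add_assoc _ (γ • c)]
    exact h1b.zsmul_add_zsmul_add h1c.symm hbc.symm (comm_comb h1c h1d x₃ x₄)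
      (comm_comb hbc hbd x₃ x₄) (comm_comb h1c h1d γ φ) (comm_comb hbc hbd γ φ) hcomb
      x₁ x₂ α β
  exact (NearringWithOne.addCommuteUpTo_mul h1b x).unique hcomm

/-- In a left nearring with identity `a` whose additive group contains elements
`b, c, d` satisfying the `G₄` relations, if `x = x₁•a + x₂•b + x₃•c + x₄•d` and
`x·b = α•a + β•b + γ•c + φ•d`, then `x·c = (x₁·β − x₂·α)•c`. -/
theorem mul_c_formula_G4 (p : ℕ) (hp : p.Prime)
    (R : Type*) [NearringWithOne R] (a b c d : R) (ha : a = 1)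
    (hpa : p • a = 0) (hpb : p • b = 0) (hpc : p • c = 0) (hpd : p • d = 0)
    (hab : a + b = b + a + c) (hac : a + c = c + a) (hbc : b + c = c + b)
    (had : a + d = d + a) (hbd : b + d = d + b) (hcd : c + d = d + c)
    (x : R) (x₁ x₂ x₃ x₄ : ℤ)
    (hx : x = x₁ • a + x₂ • b + x₃ • c + x₄ • d)
    (α β γ φ : ℤ)
    (hxb : x * b = α • a + β • b + γ • c + φ • d) :
    x * c = (x₁ * β - x₂ * α) • c := by
  subst ha
  exact mul_c_formula_G4_general hab hac hbc had hbd hx hxb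
end

section
/- Let p be an odd prime and let R be a left nearring with identity element a whose additive group contains elements b, c such that p²•a = 0, p•a ≠ 0, p•b = 0, p•c = 0, −b + a + b = (1 − p)•a, a + c = c + a and b + c = c + b. Let x ∈ R and suppose x·b = α•a + β•b + γ•c and x·c = ν•a + μ•b + φ•c for integers α, β, γ, ν, μ, φ. Then p divides α and p divides ν. -/
theorem dvd_choose_two_of_odd {n : ℕ} (hn : Odd n) : n ∣ n.choose 2 := by
  rw [Nat.choose_two_right, Nat.mul_div_assoc n (Nat.Odd.sub_odd hn odd_one).two_dvd]
  exact dvd_mul_right n _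

section Monoid

variable {M : Type*} [Monoid M] {u v w : M}

-- Turns powers of the conjugating element into powers covered by `SemiconjBy.pow_right`.
@[to_additive]
theorem semiconjBy_mul_right_iff_swap (hvw : Commute v w) :
    SemiconjBy v u (u * w) ↔ SemiconjBy u (v * w) v := by
  rw [SemiconjBy, SemiconjBy, mul_assoc, ← hvw.eq, eq_comm]

@[to_additive]
theorem pow_semiconjBy_mul_pow (h : SemiconjBy v u (u * w)) (hvw : Commute v w) (n : ℕ) :
    SemiconjBy (v ^ n) u (u * w ^ n) := by
  rw [semiconjBy_mul_right_iff_swap (hvw.pow_pow n n), ← hvw.mul_pow]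
  exact ((semiconjBy_mul_right_iff_swap hvw).mp h).pow_right n

@[to_additive]
theorem mul_pow_of_semiconjBy_mul (h : SemiconjBy v u (u * w))
    (huw : Commute u w) (hvw : Commute v w) (n : ℕ) :
    (u * v) ^ n = u ^ n * v ^ n * w ^ n.choose 2 := by
  induction n with
  | zero => simp
  | succ n ih =>
    have collect : v ^ n * u = u * v ^ n * w ^ n := by
      rw [(pow_semiconjBy_mul_pow h hvw n).eq, mul_assoc, ← (hvw.pow_pow n n).eq, mul_assoc]
    calc (u * v) ^ (n + 1)
        = u ^ n * v ^ n * (w ^ n.choose 2 * (u * v)) := by rw [pow_succ, ih, mul_assoc]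
      _ = u ^ n * (v ^ n * u) * v * w ^ n.choose 2 := by
          rw [← ((huw.mul_left hvw).pow_right _).eq]; simp only [mul_assoc]
      _ = u ^ n * u * v ^ n * (w ^ n * v) * w ^ n.choose 2 := by
          rw [collect]; simp only [mul_assoc]
      _ = u ^ (n + 1) * v ^ (n + 1) * w ^ (n + 1).choose 2 := by
          rw [← (hvw.pow_right n).eq, Nat.choose_succ_succ', Nat.choose_one_right, pow_add w,
            pow_succ u, pow_succ v]
          simp only [mul_assoc]

@[to_additive]
theorem mul_pow_of_semiconjBy_mul_of_odd (h : SemiconjBy v u (u * w))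
    (huw : Commute u w) (hvw : Commute v w) {n : ℕ} (hn : Odd n) (hw : w ^ n = 1) :
    (u * v) ^ n = u ^ n * v ^ n := by
  obtain ⟨k, hk⟩ := dvd_choose_two_of_odd hn
  rw [mul_pow_of_semiconjBy_mul h huw hvw, hk, pow_mul, hw, one_pow, mul_one]

end Monoid

@[to_additive]
theorem zpow_semiconjBy_zpow_mul_zpow {G : Type*} [Group G] {u v w : G}
    (h : SemiconjBy v u (u * w)) (huw : Commute u w) (hvw : Commute v w) (j k : ℤ) :
    SemiconjBy (v ^ j) (u ^ k) (u ^ k * w ^ (k * j)) := by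
  have hvw' : Commute v (w ^ k) := hvw.zpow_right k
  have base : SemiconjBy v (u ^ k) (u ^ k * w ^ k) := huw.mul_zpow k ▸ h.zpow_right k
  rw [zpow_mul, semiconjBy_mul_right_iff_swap (hvw'.zpow_zpow j j), ← hvw'.mul_zpow]
  exact ((semiconjBy_mul_right_iff_swap hvw').mp base).zpow_right j

section AddGroup

variable {G : Type*} [AddGroup G] {a b c : G} {n : ℕ}

theorem nsmul_zsmul_comm (a : G) (n : ℕ) (k : ℤ) : n • k • a = k • n • a := by
  simpa only [natCast_zsmul] using zsmul_comm a k n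

theorem addSemiconjBy_of_neg_add_add_eq {u : G} (h : -b + a + b = u) : AddSemiconjBy b u a := by
  rw [AddSemiconjBy, ← h, add_assoc, add_neg_cancel_left]

theorem addCommute_nsmul_of_addSemiconjBy (ha : n ^ 2 • a = 0)
    (hab : AddSemiconjBy b ((1 - n : ℤ) • a) a) : AddCommute b (n • a) := by
  have hna : n • (1 - n : ℤ) • a = n • a := by
    rw [nsmul_zsmul_comm, sub_zsmul, one_zsmul, natCast_zsmul, ← mul_nsmul, ← sq, ha, neg_zero,
      add_zero]
  exact hna ▸ hab.nsmul_right n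

theorem addSemiconjBy_add_nsmul (ha : n ^ 2 • a = 0)
    (hab : AddSemiconjBy b ((1 - n : ℤ) • a) a) : AddSemiconjBy b a (a + n • a) := by
  have hsum : (1 - n : ℤ) • a + n • a = a := by
    rw [← natCast_zsmul, ← add_zsmul, sub_add_cancel, one_zsmul]
  have hadd := hab.add_right (addCommute_nsmul_of_addSemiconjBy ha hab)
  rwa [hsum] at hadd

theorem nsmul_zsmul_add_zsmul_of_odd {z : G} (hn : Odd n) (hz : n • z = 0)
    (hab : AddSemiconjBy b a (a + z)) (haz : AddCommute a z) (hbz : AddCommute b z) (α β : ℤ) :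
    n • (α • a + β • b) = n • α • a + n • β • b :=
  add_nsmul_of_addSemiconjBy_add_of_odd (zsmul_addSemiconjBy_zsmul_add_zsmul hab haz hbz β α)
    (haz.zsmul_zsmul α _) (hbz.zsmul_zsmul β _) hn (by rw [nsmul_zsmul_comm, hz, zsmul_zero])

theorem nsmul_zsmul_add_zsmul_add_zsmul_of_odd (hn : Odd n) (ha : n ^ 2 • a = 0)
    (hb : n • b = 0) (hc : n • c = 0) (hab : AddSemiconjBy b ((1 - n : ℤ) • a) a)
    (hac : AddCommute a c) (hbc : AddCommute b c) (α β γ : ℤ) :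
    n • (α • a + β • b + γ • c) = n • α • a := by
  have hna : n • n • a = 0 := by rw [← mul_nsmul, ← sq, ha]
  have hcomm : AddCommute (α • a + β • b) (γ • c) :=
    (hac.zsmul_zsmul α γ).add_left (hbc.zsmul_zsmul β γ)
  calc n • (α • a + β • b + γ • c)
      = n • (α • a + β • b) + n • γ • c := hcomm.add_nsmul n
    _ = n • α • a + n • β • b + n • γ • c := by
        rw [nsmul_zsmul_add_zsmul_of_odd hn hna (addSemiconjBy_add_nsmul ha hab)
          (.self_nsmul a n) (addCommute_nsmul_of_addSemiconjBy ha hab)]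
    _ = n • α • a := by
        rw [nsmul_zsmul_comm b, nsmul_zsmul_comm c, hb, hc, zsmul_zero, zsmul_zero, add_zero,
          add_zero]

theorem dvd_of_nsmul_zsmul_eq_zero (hn : n ≠ 0) (ha : addOrderOf a = n ^ 2) {k : ℤ}
    (h : n • k • a = 0) : (n : ℤ) ∣ k := by
  have hdvd : (n : ℤ) * n ∣ n * k := by
    rw [← sq, ← Nat.cast_pow, ← ha, addOrderOf_dvd_iff_zsmul_eq_zero, mul_zsmul, natCast_zsmul, h]
  exact (mul_dvd_mul_iff_left (Nat.cast_ne_zero.mpr hn)).mp hdvd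

theorem coeff_alpha_nu_div_p_G5_general (hn : Odd n) (ha : addOrderOf a = n ^ 2)
    (hb : n • b = 0) (hc : n • c = 0) (hab : -b + a + b = (1 - n : ℤ) • a)
    (hac : AddCommute a c) (hbc : AddCommute b c) (f : G →+ G) {α β γ ν μ φ : ℤ}
    (hfb : f b = α • a + β • b + γ • c) (hfc : f c = ν • a + μ • b + φ • c) :
    (n : ℤ) ∣ α ∧ (n : ℤ) ∣ ν := by
  have ha' : n ^ 2 • a = 0 := ha ▸ addOrderOf_nsmul_eq_zero a
  have dvd_coeff {y : G} (hy : n • y = 0) {k l m : ℤ} (hfy : f y = k • a + l • b + m • c) :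
      (n : ℤ) ∣ k := by
    refine dvd_of_nsmul_zsmul_eq_zero hn.pos.ne' ha ?_
    rw [← nsmul_zsmul_add_zsmul_add_zsmul_of_odd hn ha' hb hc
      (addSemiconjBy_of_neg_add_add_eq hab) hac hbc k l m, ← hfy, ← map_nsmul, hy, map_zero]
  exact ⟨dvd_coeff hb hfb, dvd_coeff hc hfc⟩

end AddGroup

/-- Left multiplication by `x` as an additive endomorphism of the nearring; right multiplication is
not additive in general. -/
def NearringWithOne.mulLeft_s14 {R : Type*} [NearringWithOne R] (x : R) : R →+ R :=
  AddMonoidHom.mk' (x * ·) (NearringWithOne.left_distrib x)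

/-- In a left nearring with identity `a` whose additive group contains elements
`b, c` satisfying the `G₅` relations (with `p` an odd prime), if
`x·b = α•a + β•b + γ•c` and `x·c = ν•a + μ•b + φ•c`, then `p ∣ α` and `p ∣ ν`. -/
theorem coeff_alpha_nu_div_p_G5 (p : ℕ) (hp : p.Prime) (hodd : Odd p)
    (R : Type*) [NearringWithOne R] (a b c : R) (ha : a = 1)
    (hpa : (p ^ 2) • a = 0) (hpa' : p • a ≠ 0) (hpb : p • b = 0) (hpc : p • c = 0)
    (hab : -b + a + b = ((1 : ℤ) - p) • a)
    (hac : a + c = c + a) (hbc : b + c = c + b)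
    (x : R) (α β γ ν μ φ : ℤ)
    (hxb : x * b = α • a + β • b + γ • c)
    (hxc : x * c = ν • a + μ • b + φ • c) :
    (p : ℤ) ∣ α ∧ (p : ℤ) ∣ ν := by
  have := Fact.mk hp
  exact coeff_alpha_nu_div_p_G5_general hodd (addOrderOf_eq_prime_pow (by rwa [pow_one]) hpa)
    hpb hpc hab hac hbc (NearringWithOne.mulLeft_s14 x) hxb hxc
end

section
/- For each odd prime p there exists a local nearring R of order p⁴ together with elements a, b, c, d of R which generate the additive group R⁺ and satisfy p•a = 0, p•b = 0, p•c = 0, p•d = 0, a + b = b + a + c, a + c = c + a, b + c = c + b, a + d = d + a, b + d = d + b, c + d = d + c, and c ≠ 0. (These conditions say exactly that R⁺ is isomorphic to the group G₄ = C_p × ((C_p × C_p) ⋊ C_p) of order p⁴ and nilpotency class 2.) -/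
/-!
Let `K` be a commutative ring and give `K⁴` the addition of `K × Heis(K)`, the Heisenberg factor
being defined by the alternating form `x.a * y.b - x.b * y.a`. For each `x` there is an additive
endomorphism sending `(1, 0, 0, 0)` to `x` and scaling `(0, 1, 0, 0)` and `(0, 0, 0, 1)` by `x.a`.
It multiplies the form by `x.a ^ 2`, so compatibility with the cocycle makes it scale the central
direction `(0, 0, 1, 0)` by `x.a ^ 2`. These endomorphisms are closed under composition, so taking
them as left multiplications turns `K⁴` into a nearring with identity `(1, 0, 0, 0)`. An element `x`
is a unit exactly when `x.a` is a unit of `K`; as `x ↦ x.a` is additive, the nearring is local as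
soon as `K` is. The basic commutator is `(0, 0, 2, 0)`, and it generates the third coordinate axis
when `K = ℤ/q` with `q` odd.
-/

/-- The nearring with additive group the product of `K` (coordinate `d`) and the Heisenberg group
over `K` (coordinates `a`, `b` and the central coordinate `c`). The Heisenberg group is encoded by
the alternating cocycle `x.a * y.b - x.b * y.a`, which makes negation coordinatewise. -/
@[ext]
structure HeisenbergNearring (K : Type*) where
  a : K
  b : K
  c : K
  d : K

namespace HeisenbergNearring

variable {K : Type*}

/-- The bijection of the nearring with `K⁴` given by the four coordinates. -/
def equivProd (K : Type*) : HeisenbergNearring K ≃ K × K × K × K where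
  toFun x := (x.a, x.b, x.c, x.d)
  invFun t := ⟨t.1, t.2.1, t.2.2.1, t.2.2.2⟩

instance [Fintype K] : Fintype (HeisenbergNearring K) :=
  Fintype.ofEquiv _ (equivProd K).symm

theorem card_eq [Fintype K] : Fintype.card (HeisenbergNearring K) = Fintype.card K ^ 4 := by
  simp only [Fintype.card_congr (equivProd K), Fintype.card_prod]
  ring

section CommRing

variable [CommRing K]

instance : Zero (HeisenbergNearring K) := ⟨⟨0, 0, 0, 0⟩⟩

instance : One (HeisenbergNearring K) := ⟨⟨1, 0, 0, 0⟩⟩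

instance : Neg (HeisenbergNearring K) := ⟨fun x => ⟨-x.a, -x.b, -x.c, -x.d⟩⟩

instance : Add (HeisenbergNearring K) :=
  ⟨fun x y => ⟨x.a + y.a, x.b + y.b, x.c + y.c + (x.a * y.b - x.b * y.a), x.d + y.d⟩⟩

instance : Mul (HeisenbergNearring K) :=
  ⟨fun x y => ⟨x.a * y.a, x.b * y.a + x.a * y.b, x.c * y.a + x.a ^ 2 * y.c, x.d * y.a + x.a * y.d⟩⟩

theorem zero_def : (0 : HeisenbergNearring K) = ⟨0, 0, 0, 0⟩ := rfl

theorem one_def : (1 : HeisenbergNearring K) = ⟨1, 0, 0, 0⟩ := rfl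

theorem neg_def (x : HeisenbergNearring K) : -x = ⟨-x.a, -x.b, -x.c, -x.d⟩ := rfl

theorem add_def (x y : HeisenbergNearring K) :
    x + y = ⟨x.a + y.a, x.b + y.b, x.c + y.c + (x.a * y.b - x.b * y.a), x.d + y.d⟩ := rfl

theorem mul_def (x y : HeisenbergNearring K) :
    x * y = ⟨x.a * y.a, x.b * y.a + x.a * y.b, x.c * y.a + x.a ^ 2 * y.c, x.d * y.a + x.a * y.d⟩ :=
  rfl

instance : AddGroup (HeisenbergNearring K) :=
  AddGroup.ofLeftAxioms
    (fun x y z => by ext <;> simp only [add_def] <;> ring)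
    (fun x => by ext <;> simp only [add_def, zero_def] <;> ring)
    (fun x => by ext <;> simp only [add_def, zero_def, neg_def] <;> ring)

instance : NearringWithOne (HeisenbergNearring K) where
  mul_assoc x y z := by ext <;> simp only [mul_def] <;> ring
  one_mul x := by ext <;> simp only [mul_def, one_def] <;> ring
  mul_one x := by ext <;> simp only [mul_def, one_def] <;> ring
  left_distrib x y z := by ext <;> simp only [mul_def, add_def] <;> ring

theorem nsmul_def (n : ℕ) (x : HeisenbergNearring K) :
    n • x = ⟨n * x.a, n * x.b, n * x.c, n * x.d⟩ := by
  induction n with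
  | zero => simp [zero_def]
  | succ n ih =>
    rw [succ_nsmul, ih]
    ext <;> simp only [add_def] <;> push_cast <;> ring

theorem charP_nsmul_eq_zero (n : ℕ) [CharP K n] (x : HeisenbergNearring K) : n • x = 0 := by
  simp [nsmul_def, zero_def]

theorem add_eq_add_add_commutator (x y : HeisenbergNearring K) :
    x + y = y + x + ⟨0, 0, 2 * (x.a * y.b - x.b * y.a), 0⟩ := by
  ext <;> simp only [add_def] <;> ring

theorem add_comm_of_mul_eq_mul {x y : HeisenbergNearring K} (h : x.a * y.b = x.b * y.a) :
    x + y = y + x := by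
  rw [add_eq_add_add_commutator, h, sub_self, mul_zero, ← zero_def, add_zero]

theorem isUnit_iff {x : HeisenbergNearring K} : IsUnit x ↔ IsUnit x.a := by
  constructor
  · intro hx
    obtain ⟨y, hxy⟩ := hx.exists_right_inv
    exact .of_mul_eq_one y.a (congrArg HeisenbergNearring.a hxy)
  · intro ha
    obtain ⟨u, hu⟩ := ha.exists_right_inv
    refine isUnit_iff_exists.2 ⟨⟨u, -x.b * u ^ 2, -x.c * u ^ 3, -x.d * u ^ 2⟩, ?_, ?_⟩ <;>
      ext <;> simp only [mul_def, one_def] <;> grind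

/-- The additive projection onto the first coordinate, which detects the units. -/
def aHom (K : Type*) [CommRing K] : HeisenbergNearring K →+ K where
  toFun := a
  map_zero' := rfl
  map_add' _ _ := rfl

/-- The additive subgroup of non-units of the nearring over a local ring. -/
def nonunitsAddSubgroup (K : Type*) [CommRing K] [IsLocalRing K] :
    AddSubgroup (HeisenbergNearring K) :=
  (IsLocalRing.maximalIdeal K).toAddSubgroup.comap (aHom K)

theorem mem_nonunitsAddSubgroup [IsLocalRing K] {x : HeisenbergNearring K} :
    x ∈ nonunitsAddSubgroup K ↔ ¬ IsUnit x := by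
  rw [isUnit_iff]
  exact IsLocalRing.mem_maximalIdeal x.a

theorem closure_generators_eq_top (hK : Function.Surjective ((↑) : ℕ → K)) (h2 : IsUnit (2 : K)) :
    AddSubgroup.closure
      {(1 : HeisenbergNearring K), ⟨0, 1, 0, 0⟩, ⟨0, 0, 2, 0⟩, ⟨0, 0, 0, 1⟩} = ⊤ := by
  rw [eq_top_iff]
  rintro x -
  obtain ⟨t, ht⟩ := h2.dvd (a := x.c - x.a * x.b)
  obtain ⟨i, hi⟩ := hK x.a
  obtain ⟨j, hj⟩ := hK x.b
  obtain ⟨k, hk⟩ := hK t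
  obtain ⟨l, hl⟩ := hK x.d
  have x_eq : x = i • (1 : HeisenbergNearring K) + j • ⟨0, 1, 0, 0⟩ + k • ⟨0, 0, 2, 0⟩
      + l • ⟨0, 0, 0, 1⟩ := by
    ext <;> simp only [nsmul_def, add_def, one_def, hi, hj, hk, hl] <;> grind
  rw [x_eq]
  refine add_mem (add_mem (add_mem ?_ ?_) ?_) ?_ <;>
    exact nsmul_mem (AddSubgroup.subset_closure (by simp)) _

end CommRing

end HeisenbergNearring

theorem isLocalRing_zmod_of_isPrimePow {q : ℕ} (hq : IsPrimePow q) : IsLocalRing (ZMod q) := by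
  obtain ⟨p, k, hp, _, rfl⟩ := (isPrimePow_nat_iff q).1 hq
  have : Fact p.Prime := ⟨hp⟩
  have : Fact (1 < p ^ k) := ⟨hq.one_lt⟩
  exact .of_surjective' (PadicInt.toZModPow (p := p) k) (ZMod.ringHom_surjective _)

open HeisenbergNearring in
theorem exists_local_nearring_G4_general (q : ℕ) (hq : IsPrimePow q) (hodd : Odd q) :
    ∃ (R : Type) (_ : NearringWithOne R) (_ : Fintype R) (L : AddSubgroup R),
      (∀ x : R, x ∈ L ↔ ¬ IsUnit x) ∧
      Fintype.card R = q ^ 4 ∧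
      ∃ a b c d : R,
        AddSubgroup.closure {a, b, c, d} = ⊤ ∧
        q • a = 0 ∧ q • b = 0 ∧ q • c = 0 ∧ q • d = 0 ∧
        a + b = b + a + c ∧ a + c = c + a ∧ b + c = c + b ∧
        a + d = d + a ∧ b + d = d + b ∧ c + d = d + c ∧ c ≠ 0 := by
  have : IsLocalRing (ZMod q) := isLocalRing_zmod_of_isPrimePow hq
  have : NeZero q := ⟨hq.ne_zero⟩
  have h2 : IsUnit (2 : ZMod q) :=
    mod_cast (ZMod.isUnit_iff_coprime 2 q).2 (Nat.coprime_two_left.2 hodd)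
  refine ⟨HeisenbergNearring (ZMod q), inferInstance, inferInstance, nonunitsAddSubgroup (ZMod q),
    fun _ => mem_nonunitsAddSubgroup, by rw [card_eq, ZMod.card],
    1, ⟨0, 1, 0, 0⟩, ⟨0, 0, 2, 0⟩, ⟨0, 0, 0, 1⟩,
    closure_generators_eq_top ZMod.natCast_zmod_surjective h2,
    charP_nsmul_eq_zero q _, charP_nsmul_eq_zero q _, charP_nsmul_eq_zero q _,
    charP_nsmul_eq_zero q _, ?_, ?_, ?_, ?_, ?_, ?_, fun hc => h2.ne_zero (congrArg c hc)⟩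
  · simpa [one_def] using add_eq_add_add_commutator (1 : HeisenbergNearring (ZMod q)) ⟨0, 1, 0, 0⟩
  all_goals exact add_comm_of_mul_eq_mul (by simp [one_def])

/-- For each odd prime `p` there exists a local nearring of order `p⁴` whose
additive group is the group `G₄ = C_p × ((C_p × C_p) ⋊ C_p)`. -/
theorem exists_local_nearring_G4 (p : ℕ) (hp : p.Prime) (hodd : Odd p) :
    ∃ (R : Type) (_ : NearringWithOne R) (_ : Fintype R) (L : AddSubgroup R),
      (∀ x : R, x ∈ L ↔ ¬ IsUnit x) ∧
      Fintype.card R = p ^ 4 ∧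
      ∃ a b c d : R,
        AddSubgroup.closure {a, b, c, d} = ⊤ ∧
        p • a = 0 ∧ p • b = 0 ∧ p • c = 0 ∧ p • d = 0 ∧
        a + b = b + a + c ∧ a + c = c + a ∧ b + c = c + b ∧
        a + d = d + a ∧ b + d = d + b ∧ c + d = d + c ∧ c ≠ 0 :=
  exists_local_nearring_G4_general p hp.isPrimePow hodd
end

section
/- For each odd prime p there exists a local nearring R of order p⁴ together with elements a, b, c of R which generate the additive group R⁺ and satisfy p²•a = 0, p•a ≠ 0, p•b = 0, p•c = 0, −b + a + b = (1 − p)•a, a + c = c + a and b + c = c + b. (These conditions say exactly that R⁺ is isomorphic to the group G₅ = C_p × (C_{p²} ⋊ C_p) of order p⁴ and nilpotency class 2.) -/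
/-!
Let `ψ : M → A` be linear, where nonunits of `A` kill `M` and `ψ` takes nonunit values. In the
semidirect product `A ⋊ M` in which `m` acts on `A` as multiplication by `1 + 2ψ(m)`, the `l`-th
multiple of `(k, m)` is `(lk + l(l - 1)ψ(m)k, lm)`. This expression makes sense for every `l ∈ A`,
and the product of `x = (k, m)` and `(l, n)` is this formal `l`-th multiple of `x`, plus `(0, n)`
when `k` is a unit. Then `x` is invertible iff `k` is, so the nearring is local when `A` is. For
`A = ℤ/p²` with maximal ideal `𝔪 = pA`, `M = 𝔪 × 𝔪` and `ψ(m₁, m₂) = m₁ / 2`, the additive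
group is `G₅`.
-/

theorem closure_prod_pair_eq_top {G H : Type*} [AddGroup G] [AddGroup H] {g : G} {h : H}
    (hg : AddSubgroup.zmultiples g = ⊤) (hh : AddSubgroup.zmultiples h = ⊤) :
    AddSubgroup.closure {(g, 0), (0, h)} = (⊤ : AddSubgroup (G × H)) := by
  rw [eq_top_iff]
  rintro ⟨x, y⟩ -
  obtain ⟨m, rfl⟩ := AddSubgroup.mem_zmultiples_iff.1 (hg ▸ AddSubgroup.mem_top x)
  obtain ⟨n, rfl⟩ := AddSubgroup.mem_zmultiples_iff.1 (hh ▸ AddSubgroup.mem_top y)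
  have hsum : (m • g, n • h) = m • (g, (0 : H)) + n • ((0 : G), h) := by simp
  rw [hsum]
  exact add_mem (zsmul_mem (AddSubgroup.subset_closure (by simp)) m)
    (zsmul_mem (AddSubgroup.subset_closure (by simp)) n)

theorem zmultiples_one_zmod (n : ℕ) : AddSubgroup.zmultiples (1 : ZMod n) = ⊤ := by
  rw [eq_top_iff]
  intro x _
  obtain ⟨k, rfl⟩ := ZMod.intCast_surjective x
  exact AddSubgroup.intCast_mem_zmultiples_one k

theorem natCast_zmod_sq_ne_zero {p : ℕ} (hp : 1 < p) : (p : ZMod (p ^ 2)) ≠ 0 := by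
  rw [Ne, ZMod.natCast_eq_zero_iff]
  exact Nat.not_dvd_of_pos_of_lt (by lia) (lt_self_pow₀ hp one_lt_two)

/-- The conditions on a linear map `ψ : M → A` under which `A × M` carries the twisted nearring
structure `TwistedProd ψ`: every nonunit of `A` annihilates `M`, and all values of `ψ` are
nonunits. -/
class IsTwisting {A M : Type*} [CommRing A] [AddCommGroup M] [Module A M] (ψ : M →ₗ[A] A) :
    Prop where
  nonunit_smul {a : A} (ha : ¬IsUnit a) (m : M) : a • m = 0
  not_isUnit_apply (m : M) : ¬IsUnit (ψ m)

/-- The underlying set `A × M` of the nearring attached to `ψ`. It is a separate structure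
depending on `ψ` because `ψ` determines both operations. -/
@[ext]
structure TwistedProd {A M : Type*} [CommRing A] [AddCommGroup M] [Module A M]
    (ψ : M →ₗ[A] A) where
  fst : A
  snd : M

namespace IsTwisting

variable {A M : Type*} [CommRing A] [AddCommGroup M] [Module A M] (ψ : M →ₗ[A] A) [IsTwisting ψ]

theorem apply_smul_eq_zero (m n : M) : ψ m • n = 0 :=
  nonunit_smul ψ (not_isUnit_apply m) n

theorem apply_mul_apply_eq_zero (m n : M) : ψ m * ψ n = 0 := by
  rw [← smul_eq_mul, ← map_smul, apply_smul_eq_zero ψ, map_zero]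

theorem isUnit_one_add_mul_apply (a : A) (m : M) : IsUnit (1 + a * ψ m) := by
  refine .of_mul_eq_one (1 - a * ψ m) ?_
  linear_combination -a ^ 2 * apply_mul_apply_eq_zero ψ m m

theorem mul_trivialChar_mul_apply (k : A) (m : M) : k * (1 : MulChar A A) k * ψ m = k * ψ m := by
  by_cases hk : IsUnit k
  · rw [MulChar.one_apply hk, mul_one]
  · rw [MulChar.map_nonunit _ hk, mul_zero, zero_mul, ← smul_eq_mul, ← map_smul,
      nonunit_smul ψ hk, map_zero]

end IsTwisting

namespace TwistedProd

open IsTwisting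

section Operations

variable {A M : Type*} [CommRing A] [AddCommGroup M] [Module A M] {ψ : M →ₗ[A] A}

instance : Zero (TwistedProd ψ) := ⟨⟨0, 0⟩⟩

instance : One (TwistedProd ψ) := ⟨⟨1, 0⟩⟩

instance : Add (TwistedProd ψ) :=
  ⟨fun x y => ⟨x.fst + (1 + 2 * ψ x.snd) * y.fst, x.snd + y.snd⟩⟩

instance : Neg (TwistedProd ψ) :=
  ⟨fun x => ⟨-((1 - 2 * ψ x.snd) * x.fst), -x.snd⟩⟩

-- The trivial multiplicative character is the indicator function of the units.
noncomputable instance : Mul (TwistedProd ψ) :=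
  ⟨fun x y => ⟨y.fst * x.fst * (1 + (y.fst - 1) * ψ x.snd),
    y.fst • x.snd + (1 : MulChar A A) x.fst • y.snd⟩⟩

@[simp] theorem fst_zero : (0 : TwistedProd ψ).fst = 0 := rfl

@[simp] theorem snd_zero : (0 : TwistedProd ψ).snd = 0 := rfl

@[simp] theorem fst_one : (1 : TwistedProd ψ).fst = 1 := rfl

@[simp] theorem snd_one : (1 : TwistedProd ψ).snd = 0 := rfl

@[simp] theorem fst_add (x y : TwistedProd ψ) :
    (x + y).fst = x.fst + (1 + 2 * ψ x.snd) * y.fst := rfl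

@[simp] theorem snd_add (x y : TwistedProd ψ) : (x + y).snd = x.snd + y.snd := rfl

@[simp] theorem fst_neg (x : TwistedProd ψ) : (-x).fst = -((1 - 2 * ψ x.snd) * x.fst) := rfl

@[simp] theorem snd_neg (x : TwistedProd ψ) : (-x).snd = -x.snd := rfl

@[simp] theorem fst_mul (x y : TwistedProd ψ) :
    (x * y).fst = y.fst * x.fst * (1 + (y.fst - 1) * ψ x.snd) := rfl

@[simp] theorem snd_mul (x y : TwistedProd ψ) :
    (x * y).snd = y.fst • x.snd + (1 : MulChar A A) x.fst • y.snd := rfl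

/-- The bijection forgetting the operations. -/
def equivProd (ψ : M →ₗ[A] A) : TwistedProd ψ ≃ A × M where
  toFun x := (x.fst, x.snd)
  invFun x := ⟨x.1, x.2⟩

instance [Finite A] [Finite M] : Finite (TwistedProd ψ) :=
  .of_equiv _ (equivProd ψ).symm

theorem card_eq (ψ : M →ₗ[A] A) : Nat.card (TwistedProd ψ) = Nat.card A * Nat.card M := by
  rw [Nat.card_congr (equivProd ψ), Nat.card_prod]

end Operations

section Nearring

variable {A M : Type*} [CommRing A] [AddCommGroup M] [Module A M] {ψ : M →ₗ[A] A} [IsTwisting ψ]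

instance : AddGroup (TwistedProd ψ) :=
  AddGroup.ofLeftAxioms
    (fun x y z => by
      have hψ := apply_mul_apply_eq_zero ψ x.snd y.snd
      ext
      · simp only [fst_add, snd_add, map_add]
        linear_combination (-4 * z.fst) * hψ
      · exact add_assoc _ _ _)
    (fun x => by ext <;> simp)
    (fun x => by
      ext
      · simp only [fst_add, fst_neg, snd_neg, map_neg, fst_zero]
        ring
      · exact neg_add_cancel _)

theorem isUnit_fst_mul_iff {x y : TwistedProd ψ} :
    IsUnit (x * y).fst ↔ IsUnit x.fst ∧ IsUnit y.fst := by
  simp only [fst_mul, IsUnit.mul_iff, isUnit_one_add_mul_apply ψ, and_true]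
  exact and_comm

theorem trivialChar_fst_mul (x y : TwistedProd ψ) :
    (1 : MulChar A A) (x * y).fst = (1 : MulChar A A) x.fst * (1 : MulChar A A) y.fst := by
  rw [fst_mul, map_mul, map_mul, MulChar.one_apply (isUnit_one_add_mul_apply ψ _ _), mul_one,
    mul_comm]

noncomputable instance : Monoid (TwistedProd ψ) where
  one_mul x := by ext <;> simp
  mul_one x := by ext <;> simp
  mul_assoc := by
    rintro ⟨k, m⟩ ⟨l, n⟩ ⟨h, q⟩
    have hmm := apply_mul_apply_eq_zero ψ m m
    have hmn := apply_mul_apply_eq_zero ψ m n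
    have hχ := mul_trivialChar_mul_apply ψ k n
    ext
    · simp only [fst_mul, snd_mul, map_add, map_smul, smul_eq_mul]
      linear_combination h * (h - 1) * l * hχ + h * (h - 1) * l ^ 2 * (l - 1) * k * hmm +
        (h * (h - 1) * (1 : MulChar A A) k * l * (l - 1) * k -
          k * (h * (h - 1) * l * (2 * h * l - 1) + h ^ 2 * (h - 1) ^ 2 * l ^ 2 * ψ n)) * hmn
    · simp only [snd_mul, trivialChar_fst_mul]
      simp only [fst_mul, add_smul, mul_smul, smul_add, apply_smul_eq_zero ψ, smul_zero, one_smul]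
      module

noncomputable instance : NearringWithOne (TwistedProd ψ) where
  left_distrib := by
    rintro ⟨k, m⟩ ⟨l, n⟩ ⟨h, q⟩
    have hmm := apply_mul_apply_eq_zero ψ m m
    have hmn := apply_mul_apply_eq_zero ψ m n
    have hχ := mul_trivialChar_mul_apply ψ k n
    ext
    · simp only [fst_mul, fst_add, snd_mul, map_add, map_smul, smul_eq_mul]
      linear_combination -2 * h * hχ - 2 * l * h * (h - 1) * k * hmm +
        (k * (2 * h * (2 * l + 2 * h - 1) + 4 * h ^ 2 * ψ n) -
          2 * (1 : MulChar A A) k * h * (h - 1) * k) * hmn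
    · have hn : (2 * ψ n * h) • m = 0 := by
        rw [mul_right_comm, mul_smul, apply_smul_eq_zero ψ, smul_zero]
      simp only [fst_add, snd_add, snd_mul, add_smul, smul_add, add_mul, one_mul, hn]
      module

theorem exists_right_inv {x : TwistedProd ψ} (hx : IsUnit x.fst) : ∃ y, x * y = 1 := by
  obtain ⟨u, hu⟩ := hx.exists_left_inv
  have hψ := apply_mul_apply_eq_zero ψ x.snd x.snd
  refine ⟨⟨u - u * (u - 1) * ψ x.snd, -(u • x.snd)⟩, ?_⟩
  ext
  · simp only [fst_mul, fst_one]
    linear_combination hu + x.fst * (-u * (u - 1) * (2 * u - 1) +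
      u ^ 2 * (u - 1) ^ 2 * ψ x.snd) * hψ
  · simp [sub_smul, mul_smul, apply_smul_eq_zero ψ, MulChar.one_apply hx]

theorem isUnit_fst_of_mul_eq_one {x y : TwistedProd ψ} (h : x * y = 1) :
    IsUnit x.fst ∧ IsUnit y.fst :=
  isUnit_fst_mul_iff.1 (h ▸ isUnit_one)

theorem isUnit_iff {x : TwistedProd ψ} : IsUnit x ↔ IsUnit x.fst := by
  refine ⟨fun hx => ?_, fun hx => ?_⟩
  · obtain ⟨y, hxy⟩ := hx.exists_right_inv
    exact (isUnit_fst_of_mul_eq_one hxy).1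
  · obtain ⟨y, hxy⟩ := exists_right_inv hx
    obtain ⟨z, hyz⟩ := exists_right_inv (isUnit_fst_of_mul_eq_one hxy).2
    have hxz : x = z := left_inv_eq_right_inv hxy hyz
    exact ⟨⟨x, y, hxy, hxz ▸ hyz⟩, rfl⟩

/-- The embedding of the normal factor `A` of `A ⋊ M`. -/
def inl (ψ : M →ₗ[A] A) [IsTwisting ψ] : A →+ TwistedProd ψ where
  toFun a := ⟨a, 0⟩
  map_zero' := rfl
  map_add' a b := by ext <;> simp

/-- The embedding of the complement `M` of `A` in `A ⋊ M`. -/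
def inr (ψ : M →ₗ[A] A) [IsTwisting ψ] : M →+ TwistedProd ψ where
  toFun m := ⟨0, m⟩
  map_zero' := rfl
  map_add' m n := by ext <;> simp

theorem inl_injective : Function.Injective (inl ψ) :=
  fun _ _ h => congrArg fst h

theorem inl_add_inr (a : A) (m : M) : inl ψ a + inr ψ m = ⟨a, m⟩ := by
  ext <;> simp [inl, inr]

theorem inr_add_inl (m : M) (a : A) : inr ψ m + inl ψ a = ⟨(1 + 2 * ψ m) * a, m⟩ := by
  ext <;> simp [inl, inr]

theorem neg_inr_add_inl_add_inr (a : A) (m : M) :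
    -inr ψ m + inl ψ a + inr ψ m = inl ψ ((1 - 2 * ψ m) * a) := by
  rw [← map_neg, inr_add_inl]
  ext <;> simp [inl, inr, sub_eq_add_neg]

theorem neg_inr_add_inl_one_add_inr {m : M} {n : ℕ} (hm : 2 * ψ m = n) :
    -inr ψ m + inl ψ 1 + inr ψ m = ((1 : ℤ) - n) • inl ψ 1 := by
  rw [neg_inr_add_inl_add_inr, hm, ← map_zsmul, zsmul_one, mul_one, Int.cast_sub, Int.cast_one,
    Int.cast_natCast]

theorem inl_add_inr_comm {m : M} (hm : ψ m = 0) (a : A) :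
    inl ψ a + inr ψ m = inr ψ m + inl ψ a := by
  rw [inl_add_inr, inr_add_inl, hm, mul_zero, add_zero, one_mul]

theorem nsmul_inl_one_eq_zero_iff {n : ℕ} : n • inl ψ 1 = 0 ↔ (n : A) = 0 := by
  rw [← map_nsmul, nsmul_one, map_eq_zero_iff _ inl_injective]

theorem nsmul_inr_eq_zero {n : ℕ} (hn : ¬IsUnit (n : A)) (m : M) : n • inr ψ m = 0 := by
  rw [← map_nsmul, ← Nat.cast_smul_eq_nsmul A, nonunit_smul ψ hn, map_zero]

theorem closure_inl_image_union_inr_image {S : Set A} {T : Set M}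
    (hS : AddSubgroup.closure S = ⊤) (hT : AddSubgroup.closure T = ⊤) :
    AddSubgroup.closure (inl ψ '' S ∪ inr ψ '' T) = ⊤ := by
  rw [AddSubgroup.closure_union, ← AddMonoidHom.map_closure, ← AddMonoidHom.map_closure, hS, hT,
    eq_top_iff]
  rintro ⟨a, m⟩ -
  rw [← inl_add_inr]
  exact add_mem (AddSubgroup.mem_sup_left ⟨a, trivial, rfl⟩)
    (AddSubgroup.mem_sup_right ⟨m, trivial, rfl⟩)

theorem closure_inl_inr_pair_eq_top {N : Type*} [AddCommGroup N] [Module A N]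
    {ψ : M × N →ₗ[A] A} [IsTwisting ψ] {a : A} {m : M} {n : N}
    (ha : AddSubgroup.zmultiples a = ⊤) (hm : AddSubgroup.zmultiples m = ⊤)
    (hn : AddSubgroup.zmultiples n = ⊤) :
    AddSubgroup.closure {inl ψ a, inr ψ (m, 0), inr ψ (0, n)} = ⊤ := by
  rw [AddSubgroup.zmultiples_eq_closure] at ha
  simpa only [Set.image_singleton, Set.image_pair, Set.singleton_union] using
    closure_inl_image_union_inr_image ha (closure_prod_pair_eq_top hm hn)

/-- The first projection modulo the maximal ideal, where the twist becomes trivial. -/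
noncomputable def residueFst (ψ : M →ₗ[A] A) [IsTwisting ψ] [IsLocalRing A] :
    TwistedProd ψ →+ IsLocalRing.ResidueField A where
  toFun x := IsLocalRing.residue A x.fst
  map_zero' := map_zero _
  map_add' x y := by
    have hψ : IsLocalRing.residue A (ψ x.snd) = 0 :=
      (IsLocalRing.residue_eq_zero_iff _).2 (not_isUnit_apply x.snd)
    simp [hψ]

theorem mem_ker_residueFst [IsLocalRing A] {x : TwistedProd ψ} :
    x ∈ (residueFst ψ).ker ↔ ¬IsUnit x := by
  rw [isUnit_iff]
  exact IsLocalRing.residue_eq_zero_iff _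

end Nearring

end TwistedProd

section SquareZero

open IsLocalRing

/-- The linear map `(m₁, m₂) ↦ h m₁` on two copies of the maximal ideal; `h = 1/2` over
`ℤ/p²` is the twist giving `G₅`. -/
def maximalIdealTwist {A : Type*} [CommRing A] [IsLocalRing A] (h : A) :
    maximalIdeal A × maximalIdeal A →ₗ[A] A :=
  h • (maximalIdeal A).subtype ∘ₗ LinearMap.fst A _ _

@[simp]
theorem maximalIdealTwist_apply {A : Type*} [CommRing A] [IsLocalRing A] (h : A)
    (m : maximalIdeal A × maximalIdeal A) : maximalIdealTwist h m = h * m.1 := rfl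

theorem isTwisting_maximalIdealTwist {A : Type*} [CommRing A] [IsLocalRing A]
    (hA : maximalIdeal A ^ 2 = ⊥) (h : A) : IsTwisting (maximalIdealTwist h) where
  nonunit_smul {a} ha m := by
    have hmul (n : maximalIdeal A) : a • n = 0 := by
      have := Ideal.mul_mem_mul ((mem_maximalIdeal a).2 ha) n.2
      rw [← sq, hA] at this
      exact Subtype.ext this
    exact Prod.ext (hmul m.1) (hmul m.2)
  not_isUnit_apply m := (mem_maximalIdeal _).1 (Ideal.mul_mem_left _ h m.1.2)

end SquareZero

section ZModPrimePow

open IsLocalRing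

variable {p : ℕ} [hp : Fact p.Prime]

theorem isUnit_zmod_prime_pow_iff {n : ℕ} (x : ZMod (p ^ (n + 1))) :
    IsUnit x ↔ ¬(p : ZMod (p ^ (n + 1))) ∣ x := by
  obtain ⟨k, rfl⟩ := ZMod.natCast_zmod_surjective x
  refine ⟨fun hk hpk => ?_, fun hk => ?_⟩
  · exact ZMod.prime_natCast_not_isUnit_pow hp.out n.succ_pos (isUnit_of_dvd_unit hpk hk)
  · exact (ZMod.isUnit_natCast_iff_not_dvd_pow hp.out n.succ_pos).2 (hk ∘ Nat.cast_dvd_cast)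

instance isLocalRing_zmod_prime_pow (n : ℕ) : IsLocalRing (ZMod (p ^ (n + 1))) :=
  have : Fact (1 < p ^ (n + 1)) := ⟨Nat.one_lt_pow n.succ_ne_zero hp.out.one_lt⟩
  .of_nonunits_add fun x y hx hy => by
    simp only [mem_nonunits_iff, isUnit_zmod_prime_pow_iff, not_not] at hx hy ⊢
    exact dvd_add hx hy

theorem maximalIdeal_zmod_prime_pow (n : ℕ) :
    maximalIdeal (ZMod (p ^ (n + 1))) = Ideal.span {(p : ZMod (p ^ (n + 1)))} := by
  ext x
  rw [mem_maximalIdeal, mem_nonunits_iff, isUnit_zmod_prime_pow_iff, not_not,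
    Ideal.mem_span_singleton]

/-- The generator `p` of the maximal ideal of `ℤ/pⁿ⁺¹`. -/
def maximalIdealGen (p n : ℕ) [Fact p.Prime] : maximalIdeal (ZMod (p ^ (n + 1))) :=
  ⟨p, maximalIdeal_zmod_prime_pow (p := p) n ▸ Ideal.mem_span_singleton_self _⟩

@[simp]
theorem coe_maximalIdealGen (n : ℕ) : (maximalIdealGen p n : ZMod (p ^ (n + 1))) = p := rfl

theorem addOrderOf_maximalIdealGen (n : ℕ) : addOrderOf (maximalIdealGen p n) = p ^ n := by
  rw [← addOrderOf_injective (maximalIdeal _).subtype.toAddMonoidHom Subtype.val_injective,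
    LinearMap.toAddMonoidHom_coe, Submodule.subtype_apply, coe_maximalIdealGen,
    ZMod.addOrderOf_coe p (NeZero.ne _), pow_succ, Nat.gcd_mul_left_left,
    Nat.mul_div_cancel _ hp.out.pos]

theorem zmultiples_maximalIdealGen (n : ℕ) :
    AddSubgroup.zmultiples (maximalIdealGen p n) = ⊤ := by
  rw [eq_top_iff]
  rintro ⟨x, hx⟩ -
  rw [maximalIdeal_zmod_prime_pow, Ideal.mem_span_singleton'] at hx
  obtain ⟨y, rfl⟩ := hx
  obtain ⟨k, rfl⟩ := ZMod.intCast_surjective y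
  exact ⟨k, Subtype.ext (zsmul_eq_mul _ _)⟩

theorem card_maximalIdeal_zmod_prime_pow (n : ℕ) :
    Nat.card (maximalIdeal (ZMod (p ^ (n + 1)))) = p ^ n := by
  rw [← AddSubgroup.card_top, ← zmultiples_maximalIdealGen, Nat.card_zmultiples,
    addOrderOf_maximalIdealGen]

theorem maximalIdeal_zmod_prime_sq_sq : maximalIdeal (ZMod (p ^ 2)) ^ 2 = ⊥ := by
  rw [maximalIdeal_zmod_prime_pow 1, Ideal.span_singleton_pow, ← Nat.cast_pow, ZMod.natCast_self,
    Ideal.span_singleton_eq_bot]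

end ZModPrimePow

open TwistedProd

/-- For each odd prime `p` there exists a local nearring of order `p⁴` whose
additive group is the group `G₅ = C_p × (C_{p²} ⋊ C_p)`. -/
theorem exists_local_nearring_G5 (p : ℕ) (hp : p.Prime) (hodd : Odd p) :
    ∃ (R : Type) (_ : NearringWithOne R) (_ : Fintype R) (L : AddSubgroup R),
      (∀ x : R, x ∈ L ↔ ¬ IsUnit x) ∧
      Fintype.card R = p ^ 4 ∧
      ∃ a b c : R,
        AddSubgroup.closure {a, b, c} = ⊤ ∧
        (p ^ 2) • a = 0 ∧ p • a ≠ 0 ∧ p • b = 0 ∧ p • c = 0 ∧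
        -b + a + b = ((1 : ℤ) - p) • a ∧ a + c = c + a ∧ b + c = c + b := by
  have : Fact p.Prime := ⟨hp⟩
  obtain ⟨h, hh⟩ : ∃ h : ZMod (p ^ 2), 2 * h = 1 :=
    ((ZMod.isUnit_iff_coprime 2 (p ^ 2)).2 hodd.pow.coprime_two_left).exists_right_inv
  let ψ := maximalIdealTwist h
  have : IsTwisting ψ := isTwisting_maximalIdealTwist maximalIdeal_zmod_prime_sq_sq h
  let g := maximalIdealGen p 1
  have hψg : 2 * ψ (g, 0) = p := by
    rw [maximalIdealTwist_apply, ← mul_assoc, hh, one_mul, coe_maximalIdealGen]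
  have hp_nonunit : ¬IsUnit (p : ZMod (p ^ 2)) := ZMod.prime_natCast_not_isUnit_pow hp two_pos
  have hg : AddSubgroup.zmultiples g = ⊤ := zmultiples_maximalIdealGen 1
  have : Fintype (TwistedProd ψ) := .ofFinite _
  refine ⟨TwistedProd ψ, inferInstance, inferInstance, (residueFst ψ).ker,
    fun _ => mem_ker_residueFst, ?_, inl ψ 1, inr ψ (g, 0), inr ψ (0, g),
    closure_inl_inr_pair_eq_top (zmultiples_one_zmod _) hg hg,
    nsmul_inl_one_eq_zero_iff.2 (ZMod.natCast_self _),
    nsmul_inl_one_eq_zero_iff.not.2 (natCast_zmod_sq_ne_zero hp.one_lt),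
    nsmul_inr_eq_zero hp_nonunit _, nsmul_inr_eq_zero hp_nonunit _,
    neg_inr_add_inl_one_add_inr hψg, inl_add_inr_comm (mul_zero h) 1,
    ((AddCommute.all _ _).map (inr ψ)).eq⟩
  rw [← Nat.card_eq_fintype_card, card_eq, Nat.card_prod, Nat.card_zmod,
    card_maximalIdeal_zmod_prime_pow 1]
  ring
end
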